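/- arXiv:1909.07762 — 3 statements merged into one kernel-verified Lean document; each statement's English description precedes it below -/
import Mathlib

section
/- For all nonnegative integers m and n, π(m,n) = Σ_{0 ≤ k ≤ min(m,n)} c(min(m,n) − k) · α(|m−n|, k), where α(s,k) = Σ_{ℓ ≥ 0} (−1)^ℓ p(k − ℓ(ℓ+1)/2 − ℓs) and p(r) := 0 for all r < 0. -/
open Finset

/-- A pair of sequences of parts is *steadily decreasing* if
`min (a i) (b i) ≥ max (a (i+1)) (b (i+1))` for all `i`. -/
noncomputable def SteadilyDecreasing (a b : ℕ → ℕ) : Prop :=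
  ∀ i, max (a (i + 1)) (b (i + 1)) ≤ min (a i) (b i)

/-- `bipartitePi m n` is the number of pairs of partitions (given as non-increasing,
finitely supported sequences) of the bipartite number `(m, n)` with steadily
decreasing parts. -/
noncomputable def bipartitePi (m n : ℕ) : ℕ :=
  Nat.card {p : (ℕ →₀ ℕ) × (ℕ →₀ ℕ) //
    (∀ i, p.1 (i + 1) ≤ p.1 i) ∧ (∀ i, p.2 (i + 1) ≤ p.2 i) ∧
    SteadilyDecreasing p.1 p.2 ∧
    (p.1.sum fun _ x => x) = m ∧ (p.2.sum fun _ x => x) = n}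

/-- The partition function `p n`. -/
noncomputable def partitionCount (n : ℕ) : ℕ := Nat.card (Nat.Partition n)

/-- The partition function extended to the integers, with `p r = 0` for `r < 0`. -/
noncomputable def partitionCountInt (r : ℤ) : ℕ := if 0 ≤ r then partitionCount r.toNat else 0

/-- The cubic partition function `c n`, counting partitions of `n` in which even
parts come in two colors (equivalently, pairs of a partition together with a
partition into even parts, of total size `n`). -/
noncomputable def cubicPartition (n : ℕ) : ℕ :=
  Nat.card {p : Multiset ℕ × Multiset ℕ //
    (∀ i ∈ p.1, 0 < i) ∧ (∀ i ∈ p.2, 0 < i ∧ Even i) ∧ p.1.sum + p.2.sum = n}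

/-- The Andrews–Garvan crank of a partition: the largest part if there are no ones,
and otherwise the number of parts larger than the number of ones minus the number of
ones. -/
noncomputable def crank {n : ℕ} (l : n.Partition) : ℤ :=
  if l.parts.count 1 = 0 then (l.parts.sup : ℤ)
  else ((l.parts.filter fun p => l.parts.count 1 < p).card : ℤ) - l.parts.count 1

/-- `crankM m n` is the crank counting function `M(m, n)`: the number of partitions
of `n` with crank `m`, with the standard convention at `n = 1`
(`M(0,1) = -1`, `M(±1,1) = 1`, `M(m,1) = 0` otherwise). -/
noncomputable def crankM (m : ℤ) (n : ℕ) : ℤ :=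
  if n = 1 then (if m = 0 then -1 else if m.natAbs = 1 then 1 else 0)
  else (Nat.card {l : n.Partition // crank l = m} : ℤ)

/-- `alphaBip s k = Σ_{ℓ ≥ 0} (-1)^ℓ p(k - ℓ(ℓ+1)/2 - ℓ s)`. -/
noncomputable def alphaBip (s k : ℕ) : ℤ :=
  ∑' ℓ : ℕ, (-1 : ℤ) ^ ℓ *
    (partitionCountInt ((k : ℤ) - ℓ * (ℓ + 1) / 2 - ℓ * s) : ℤ)

/-- `Dbip m n = π(m,n) - π(m-1,n)`, with `π(-1,n) := 0`. -/
noncomputable def Dbip (m n : ℕ) : ℤ :=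
  (bipartitePi m n : ℤ) - if m = 0 then 0 else (bipartitePi (m - 1) n : ℤ)


noncomputable def mkF (f : ℕ → ℕ) (h : ∃ N, ∀ i, N ≤ i → f i = 0) : ℕ →₀ ℕ :=
  Finsupp.ofSupportFinite f (by
    obtain ⟨N, hN⟩ := h
    apply (Set.finite_Iio N).subset
    intro i hi
    by_contra hc
    exact hi (hN i (by simpa using hc)))

@[simp] theorem mkF_apply (f : ℕ → ℕ) (h : ∃ N, ∀ i, N ≤ i → f i = 0) (i : ℕ) :
    mkF f h i = f i := rfl

theorem bddF (f : ℕ →₀ ℕ) : ∃ N, ∀ i, N ≤ i → f i = 0 := by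
  refine ⟨f.support.sup id + 1, fun i hi => ?_⟩
  by_contra hc
  have := Finset.le_sup (f := id) (Finsupp.mem_support_iff.2 hc)
  simp at this
  omega

noncomputable def WW (φ : ℕ → ℕ) (f : ℕ →₀ ℕ) : ℕ := f.sum fun i x => φ i * x

theorem WW_eq (φ : ℕ → ℕ) (f : ℕ →₀ ℕ) (N : ℕ) (h : ∀ i, N ≤ i → f i = 0) :
    WW φ f = ∑ i ∈ range N, φ i * f i := by
  unfold WW
  apply Finsupp.sum_of_support_subset
  · intro i hi
    by_contra hc
    exact (Finsupp.mem_support_iff.1 hi) (h i (by simpa using hc))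
  · simp

abbrev TT := (ℕ →₀ ℕ) × (ℕ →₀ ℕ) × (ℕ →₀ ℕ)

def tt (a b : ℕ → ℕ) (i : ℕ) : ℕ := min (a i) (b i) - max (a (i + 1)) (b (i + 1))

theorem tt_comm (a b : ℕ → ℕ) : tt a b = tt b a := by
  funext i; simp [tt, min_comm, max_comm]

theorem bdd_aux (a b : ℕ →₀ ℕ) (c : ℕ → ℕ) (k : ℕ) (hc : ∀ i, i ≤ c i) :
    ∃ N, ∀ i, N ≤ i → tt a b (c i) + k * (a i - b i) = 0 := by
  obtain ⟨N, hN⟩ := bddF a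
  refine ⟨N, fun i hi => ?_⟩
  simp [tt, hN i hi, hN (c i) (hi.trans (hc i))]

noncomputable def FF (p : (ℕ →₀ ℕ) × (ℕ →₀ ℕ)) : TT :=
  (mkF (fun i => tt p.1 p.2 (2 * i) + 1 * (p.1 i - p.2 i)) (bdd_aux _ _ _ _ (by intro i; omega)),
   mkF (fun i => tt p.2 p.1 (2 * i) + 1 * (p.2 i - p.1 i)) (bdd_aux _ _ _ _ (by intro i; omega)),
   mkF (fun i => tt p.1 p.2 (2 * i + 1) + 0 * (p.1 i - p.2 i)) (bdd_aux _ _ _ _ (by intro i; omega)))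

noncomputable def W1 (t : TT) : ℕ :=
  WW (fun j => j + 1) t.1 + WW (fun j => j) t.2.1 + WW (fun j => 2 * j + 2) t.2.2
noncomputable def W2 (t : TT) : ℕ :=
  WW (fun j => j) t.1 + WW (fun j => j + 1) t.2.1 + WW (fun j => 2 * j + 2) t.2.2

theorem abel_aux (a b : ℕ → ℕ) (h : SteadilyDecreasing a b) (K : ℕ) :
    ∑ j ∈ range K, ((j + 1) * tt a b j + (j + 1) * (a j - b j) + j * (b j - a j))
      + K * max (a K) (b K) = ∑ j ∈ range K, a j + 0 * max (a 0) (b 0) := by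
  induction K with
  | zero => simp
  | succ K ih =>
    rw [sum_range_succ, sum_range_succ]
    have hK := h K
    have e1 : min (a K) (b K) = tt a b K + max (a (K+1)) (b (K+1)) := by
      unfold tt; omega
    have e2 : a K = min (a K) (b K) + (a K - b K) := by omega
    have e3 : max (a K) (b K) = min (a K) (b K) + (a K - b K) + (b K - a K) := by omega
    generalize a K - b K = u at *
    generalize b K - a K = v at *
    generalize max (a (K+1)) (b (K+1)) = M' at *
    rw [e3, e1] at ih
    rw [e1] at e2
    rw [e2]
    nlinarith [ih]

theorem two_sum (F : ℕ → ℕ) (N : ℕ) :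
    ∑ j ∈ range (2 * N), F j = ∑ j ∈ range N, (F (2 * j) + F (2 * j + 1)) := by
  induction N with
  | zero => simp
  | succ N ih => rw [show 2 * (N + 1) = 2 * N + 1 + 1 by ring, sum_range_succ, sum_range_succ, ih,
      sum_range_succ]; ring

theorem W1_FF (p : (ℕ →₀ ℕ) × (ℕ →₀ ℕ)) (h : SteadilyDecreasing p.1 p.2) :
    W1 (FF p) = p.1.sum fun _ x => x := by
  obtain ⟨a, b⟩ := p
  simp only at h
  obtain ⟨N1, hN1⟩ := bddF a
  obtain ⟨N2, hN2⟩ := bddF b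
  set N := max N1 N2
  have ha : ∀ i, N ≤ i → a i = 0 := fun i hi => hN1 i (by omega)
  have hb : ∀ i, N ≤ i → b i = 0 := fun i hi => hN2 i (by omega)
  have e0 : (a.sum fun _ x => x) = ∑ j ∈ range (2 * N), a j := by
    have := WW_eq (fun _ => 1) a (2 * N) (fun i hi => ha i (by omega))
    simpa [WW] using this
  have e1 := abel_aux a b h (2 * N)
  rw [ha (2 * N) (by omega), hb (2 * N) (by omega), sum_add_distrib, sum_add_distrib] at e1
  rw [two_sum (fun j => (j + 1) * tt a b j)] at e1
  have e2 : ∀ F : ℕ → ℕ, (∀ i, N ≤ i → F i = 0) → ∑ j ∈ range (2 * N), F j = ∑ j ∈ range N, F j := by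
    intro F hF
    symm
    apply sum_subset
    · intro i; simp; omega
    · intro i _ hi; exact hF i (by simpa using hi)
  rw [e2 (fun j => (j + 1) * (a j - b j)) (by intro i hi; simp [ha i hi]),
    e2 (fun j => j * (b j - a j)) (by intro i hi; simp [hb i hi])] at e1
  show W1 (FF (a, b)) = a.sum fun _ x => x
  rw [e0]
  unfold W1
  rw [WW_eq _ _ N, WW_eq _ _ N, WW_eq _ _ N]
  · simp only [FF, mkF_apply, tt_comm b a]
    simp only [zero_mul, mul_zero, max_self, add_zero] at e1
    rw [← e1, ← sum_add_distrib, ← sum_add_distrib, ← sum_add_distrib, ← sum_add_distrib]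
    apply sum_congr rfl
    intros; ring
  · intro i hi; simp [FF, tt, ha i hi, ha (2 * i + 1) (by omega)]
  · intro i hi; simp [FF, tt, ha i hi, hb i hi, ha (2 * i) (by omega)]
  · intro i hi; simp [FF, tt, ha i hi, ha (2 * i) (by omega)]

theorem sd_swap (a b : ℕ → ℕ) (h : SteadilyDecreasing a b) : SteadilyDecreasing b a := by
  intro i
  have := h i
  rw [max_comm, min_comm]; exact this

theorem W2_FF (p : (ℕ →₀ ℕ) × (ℕ →₀ ℕ)) (h : SteadilyDecreasing p.1 p.2) :
    W2 (FF p) = p.2.sum fun _ x => x := by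
  have := W1_FF (p.2, p.1) (sd_swap _ _ h)
  simp only at this
  rw [← this]
  have e : (FF p).2.2 = (FF (p.2, p.1)).2.2 := by
    ext i
    simp [FF, tt_comm p.2 p.1]
  unfold W1 W2
  rw [e]
  have e1 : (FF (p.2, p.1)).1 = (FF p).2.1 := rfl
  have e2 : (FF (p.2, p.1)).2.1 = (FF p).1 := rfl
  rw [e1, e2]; ring

theorem FF_inj (p p' : (ℕ →₀ ℕ) × (ℕ →₀ ℕ)) (h : SteadilyDecreasing p.1 p.2)
    (h' : SteadilyDecreasing p'.1 p'.2) (e : FF p = FF p') : p = p' := by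
  obtain ⟨a, b⟩ := p
  obtain ⟨a', b'⟩ := p'
  simp only at h h'
  have e1 : ∀ i, tt a b (2 * i) + (a i - b i) = tt a' b' (2 * i) + (a' i - b' i) := by
    intro i
    have := DFunLike.congr_fun (congrArg Prod.fst e) i
    simpa [FF] using this
  have e2 : ∀ i, tt a b (2 * i) + (b i - a i) = tt a' b' (2 * i) + (b' i - a' i) := by
    intro i
    have := DFunLike.congr_fun (congrArg (fun t : TT => t.2.1) e) i
    simpa [FF, tt_comm b a, tt_comm b' a'] using this
  have e3 : ∀ i, tt a b (2 * i + 1) = tt a' b' (2 * i + 1) := by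
    intro i
    have := DFunLike.congr_fun (congrArg (fun t : TT => t.2.2) e) i
    simpa [FF] using this
  have et : ∀ i, tt a b i = tt a' b' i := by
    intro i
    obtain ⟨j, hj | hj⟩ := i.even_or_odd'
    · rw [hj]; have := e1 j; have := e2 j; omega
    · rw [hj]; exact e3 j
  obtain ⟨N1, hN1⟩ := bddF a
  obtain ⟨N2, hN2⟩ := bddF b
  obtain ⟨N3, hN3⟩ := bddF a'
  obtain ⟨N4, hN4⟩ := bddF b'
  have key : ∀ k i, N1 + N2 + N3 + N4 ≤ i + k → a i = a' i ∧ b i = b' i := by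
    intro k
    induction k with
    | zero =>
      intro i hi
      rw [hN1 i (by omega), hN2 i (by omega), hN3 i (by omega), hN4 i (by omega)]
      simp
    | succ k ih =>
      intro i hi
      obtain ⟨q1, q2⟩ := ih (i + 1) (by omega)
      have t1 := e1 i
      have t2 := e2 i
      have t3 := et (2 * i)
      have t4 := et i
      have t5 := h i
      have t6 := h' i
      unfold tt at t4
      rw [q1, q2] at t4 t5
      omega
  ext i
  · exact (key (N1 + N2 + N3 + N4) i (by omega)).1
  · exact (key (N1 + N2 + N3 + N4) i (by omega)).2

theorem FF_surj (t : TT) : ∃ p : (ℕ →₀ ℕ) × (ℕ →₀ ℕ), SteadilyDecreasing p.1 p.2 ∧ FF p = t := by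
  obtain ⟨f, g, h⟩ := t
  obtain ⟨N1, hN1⟩ := bddF f
  obtain ⟨N2, hN2⟩ := bddF g
  obtain ⟨N3, hN3⟩ := bddF h
  set N := 2 * (N1 + N2 + N3) + 2 with hN
  let τ : ℕ → ℕ := fun j => if j % 2 = 0 then min (f (j / 2)) (g (j / 2)) else h (j / 2)
  have hτ : ∀ j, N ≤ j → τ j = 0 := by
    intro j hj
    simp only [τ]
    rw [hN1 (j / 2) (by omega), hN3 (j / 2) (by omega)]
    simp
  let w : ℕ → ℕ := fun j => τ j + (f j - g j) + (g j - f j)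
  have hw : ∀ j, N ≤ j → w j = 0 := by
    intro j hj
    simp only [w]
    rw [hτ j hj, hN1 j (by omega), hN2 j (by omega)]
  let M : ℕ → ℕ := fun i => ∑ j ∈ Ico i N, w j
  have hM0 : ∀ i, N ≤ i → M i = 0 := by
    intro i hi; simp [M, Ico_eq_empty_of_le hi]
  have hM : ∀ i, M i = τ i + (f i - g i) + (g i - f i) + M (i + 1) := by
    intro i
    rcases lt_or_ge i N with hi | hi
    · simp only [M]; rw [sum_eq_sum_Ico_succ_bot hi]
    · rw [hM0 i hi, hM0 (i + 1) (by omega)]; have := hw i hi; simp only [w] at this; omega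
  let a := mkF (fun i => τ i + (f i - g i) + M (i + 1)) ⟨N, fun i hi => by
    have := hM i; rw [hM0 i hi] at this; omega⟩
  let b := mkF (fun i => τ i + (g i - f i) + M (i + 1)) ⟨N, fun i hi => by
    have := hM i; rw [hM0 i hi] at this; omega⟩
  have ha : ∀ i, a i = τ i + (f i - g i) + M (i + 1) := fun i => rfl
  have hb : ∀ i, b i = τ i + (g i - f i) + M (i + 1) := fun i => rfl
  have hmax : ∀ i, max (a i) (b i) = M i := by
    intro i; rw [ha, hb, hM i]; omega
  have hmin : ∀ i, min (a i) (b i) = τ i + M (i + 1) := by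
    intro i; rw [ha, hb]; omega
  have htt : ∀ i, tt a b i = τ i := by
    intro i; unfold tt; rw [hmax, hmin]; omega
  have h0 : ∀ i, τ (2 * i) = min (f i) (g i) := by
    intro i; simp [τ]
  have h1 : ∀ i, τ (2 * i + 1) = h i := by
    intro i; simp only [τ]; rw [if_neg (by omega), show (2 * i + 1) / 2 = i by omega]
  refine ⟨(a, b), ?_, ?_⟩
  · intro i
    simp only
    rw [hmax, hmin]; omega
  · ext i
    · simp only [FF, mkF_apply]; rw [htt, h0, ha, hb]; omega
    · simp only [FF, mkF_apply]; rw [tt_comm b a, htt, h0, ha, hb]; omega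
    · simp only [FF, mkF_apply]; rw [htt, h1, ha, hb]; omega

theorem sd_anti (a b : ℕ → ℕ) (h : SteadilyDecreasing a b) :
    (∀ i, a (i + 1) ≤ a i) ∧ (∀ i, b (i + 1) ≤ b i) := by
  constructor <;> intro i <;> have := h i <;> omega

theorem pi_eq_Y (m n : ℕ) : bipartitePi m n = Nat.card {t : TT // W1 t = m ∧ W2 t = n} := by
  unfold bipartitePi
  apply Nat.card_eq_of_bijective
    (fun p => ⟨FF p.1, (W1_FF _ p.2.2.2.1).trans p.2.2.2.2.1, (W2_FF _ p.2.2.2.1).trans p.2.2.2.2.2⟩)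
  constructor
  · intro p p' e
    apply Subtype.ext
    exact FF_inj _ _ p.2.2.2.1 p'.2.2.2.1 (congrArg Subtype.val e)
  · rintro ⟨t, h1, h2⟩
    obtain ⟨p, hp, rfl⟩ := FF_surj t
    exact ⟨⟨p, (sd_anti _ _ hp).1, (sd_anti _ _ hp).2, hp, (W1_FF _ hp).symm.trans h1,
      (W2_FF _ hp).symm.trans h2⟩, rfl⟩

theorem pi_symm (m n : ℕ) : bipartitePi m n = bipartitePi n m := by
  unfold bipartitePi
  apply Nat.card_eq_of_bijective
    (fun p => ⟨(p.1.2, p.1.1), p.2.2.1, p.2.1, sd_swap _ _ p.2.2.2.1, p.2.2.2.2.2, p.2.2.2.2.1⟩)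
  constructor
  · rintro ⟨⟨a, b⟩, _⟩ ⟨⟨a', b'⟩, _⟩ e
    simp at e
    simp [e]
  · rintro ⟨⟨a, b⟩, h⟩
    exact ⟨⟨(b, a), h.2.1, h.1, sd_swap _ _ h.2.2.1, h.2.2.2.2, h.2.2.2.1⟩, rfl⟩

noncomputable def Wa (t : TT) : ℕ :=
  WW (fun j => j + 2) t.1 + WW (fun j => j) t.2.1 + WW (fun j => 2 * j + 2) t.2.2
noncomputable def Wb (t : TT) : ℕ :=
  WW (fun j => j + 1) t.1 + WW (fun j => j + 1) t.2.1 + WW (fun j => 2 * j + 2) t.2.2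

noncomputable def shiftF (f : ℕ →₀ ℕ) : ℕ →₀ ℕ :=
  mkF (fun i => f (i + 1)) (by
    obtain ⟨N, hN⟩ := bddF f
    exact ⟨N, fun i hi => hN _ (by omega)⟩)

noncomputable def consF (x : ℕ) (f : ℕ →₀ ℕ) : ℕ →₀ ℕ :=
  mkF (fun i => if i = 0 then x else f (i - 1)) (by
    obtain ⟨N, hN⟩ := bddF f
    refine ⟨N + 1, fun i hi => ?_⟩
    rw [if_neg (by omega), hN _ (by omega)])

theorem shift_cons (x : ℕ) (f : ℕ →₀ ℕ) : shiftF (consF x f) = f := by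
  ext i; simp [shiftF, consF]

theorem WW_shift (φ : ℕ → ℕ) (f : ℕ →₀ ℕ) :
    WW φ f = φ 0 * f 0 + WW (fun i => φ (i + 1)) (shiftF f) := by
  obtain ⟨N, hN⟩ := bddF f
  rw [WW_eq φ f (N + 1) (fun i hi => hN i (by omega)),
    WW_eq _ (shiftF f) N (fun i hi => hN _ (by omega)), sum_range_succ']
  simp [shiftF, add_comm]

theorem W12_shift (t : TT) : W1 t = t.1 0 + Wa (shiftF t.1, t.2) ∧ W2 t = Wb (shiftF t.1, t.2) := by
  unfold W1 W2 Wa Wb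
  rw [WW_shift (fun j => j + 1) t.1, WW_shift (fun j => j) t.1]
  constructor
  · simp only [zero_add, one_mul, add_assoc, Nat.reduceAdd]
  · simp

theorem pi_eq_X (m n : ℕ) : bipartitePi m n = Nat.card {t : TT // Wb t = n ∧ Wa t ≤ m} := by
  rw [pi_eq_Y]
  apply Nat.card_eq_of_bijective
    (fun t => ⟨(shiftF t.1.1, t.1.2), (W12_shift t.1).2.symm.trans t.2.2, by
      have := (W12_shift t.1).1; have := t.2.1; omega⟩)
  constructor
  · rintro ⟨⟨f, g⟩, h1, h2⟩ ⟨⟨f', g'⟩, h1', h2'⟩ e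
    simp only [Subtype.mk.injEq, Prod.mk.injEq] at e
    obtain ⟨e1, rfl⟩ := e
    have a1 := (W12_shift (f, g)).1
    have a2 := (W12_shift (f', g)).1
    simp only at a1 a2
    rw [e1] at a1
    have e0 : f 0 = f' 0 := by omega
    have : f = f' := by
      ext i
      cases i with
      | zero => exact e0
      | succ i => exact DFunLike.congr_fun e1 i
    subst this
    rfl
  · rintro ⟨⟨f, g⟩, h1, h2⟩
    have := W12_shift (consF (m - Wa (f, g)) f, g)
    simp only [shift_cons] at this
    have h0 : consF (m - Wa (f, g)) f 0 = m - Wa (f, g) := by simp [consF]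
    rw [h0] at this
    refine ⟨⟨(consF (m - Wa (f, g)) f, g), ?_, ?_⟩, ?_⟩
    · omega
    · omega
    · simp [shift_cons]

def swT (t : TT) : TT := (t.2.1, t.1, t.2.2)

theorem WW_add (φ ψ : ℕ → ℕ) (f : ℕ →₀ ℕ) : WW (fun j => φ j + ψ j) f = WW φ f + WW ψ f := by
  unfold WW
  rw [← Finsupp.sum_add]
  simp [add_mul]

theorem Wb_sw (t : TT) : Wb (swT t) = Wb t := by
  unfold Wb swT; ring

theorem Wa_sw (t : TT) : Wa (swT t) + Wa t = 2 * Wb t := by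
  unfold Wa Wb swT
  have e := fun f => WW_add (fun j => j + 1) (fun _ => 1) f
  have e' := fun f => WW_add (fun j => j) (fun _ => 1) f
  simp only [add_assoc, Nat.reduceAdd] at e
  simp only [e, e']
  ring

theorem WW_toMultiset (c : ℕ → ℕ) (f : ℕ →₀ ℕ) :
    ((Finsupp.toMultiset f).map c).sum = WW c f := by
  induction f using Finsupp.induction_linear with
  | zero => simp [WW]
  | add f g hf hg =>
    rw [map_add, Multiset.map_add, Multiset.sum_add, hf, hg]
    unfold WW
    rw [Finsupp.sum_add_index'] <;> intros <;> ring
  | single a b => simp [WW, Finsupp.toMultiset_single, Multiset.map_nsmul, mul_comm, Multiset.sum_nsmul]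

theorem map_succ_surj (c d : ℕ → ℕ) (s : Multiset ℕ) (h : ∀ i ∈ s, c (d i) = i) :
    ∃ f : ℕ →₀ ℕ, (Finsupp.toMultiset f).map c = s := by
  obtain ⟨f, hf⟩ : ∃ f, Finsupp.toMultiset f = s.map d :=
    ⟨Multiset.toFinsupp (s.map d), Multiset.toFinsupp_toMultiset _⟩
  refine ⟨f, ?_⟩
  rw [hf, Multiset.map_map]
  conv_rhs => rw [← Multiset.map_id s]
  exact Multiset.map_congr rfl h

theorem ms_inj (c : ℕ → ℕ) (hc : Function.Injective c) (f g : ℕ →₀ ℕ)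
    (h : (Finsupp.toMultiset f).map c = (Finsupp.toMultiset g).map c) : f = g :=
  Multiset.toFinsupp.symm.injective (Multiset.map_injective hc h)

theorem part_bij (k : ℕ) : Function.Bijective
    (fun f : {f : ℕ →₀ ℕ // WW (fun j => j + 1) f = k} =>
      (⟨(Finsupp.toMultiset f.1).map (fun j => j + 1), by
        intro i hi; simp at hi; omega, by rw [WW_toMultiset]; exact f.2⟩ : Nat.Partition k)) := by
  constructor
  · intro f g e
    apply Subtype.ext
    exact ms_inj (fun j => j + 1) (fun x y h => by simpa using h) _ _ (congrArg Nat.Partition.parts e)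
  · intro q
    obtain ⟨f, hf⟩ := map_succ_surj (fun j => j + 1) (fun j => j - 1) q.parts (by
      intro i hi; have := q.parts_pos hi; omega)
    refine ⟨⟨f, ?_⟩, ?_⟩
    · rw [← WW_toMultiset, hf, q.parts_sum]
    · ext1; exact hf

theorem part_card (k : ℕ) :
    partitionCount k = Nat.card {f : ℕ →₀ ℕ // WW (fun j => j + 1) f = k} :=
  (Nat.card_eq_of_bijective _ (part_bij k)).symm

theorem cubic_card (n : ℕ) : cubicPartition n =
    Nat.card {p : (ℕ →₀ ℕ) × (ℕ →₀ ℕ) // WW (fun j => j + 1) p.1 + WW (fun j => 2 * j + 2) p.2 = n} := by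
  symm
  unfold cubicPartition
  apply Nat.card_eq_of_bijective
    (fun p => ⟨((Finsupp.toMultiset p.1.1).map (fun j => j + 1),
        (Finsupp.toMultiset p.1.2).map (fun j => 2 * j + 2)), by
          intro i hi; simp at hi; omega, by
          intro i hi
          simp only [Multiset.mem_map] at hi
          obtain ⟨j, _, rfl⟩ := hi
          exact ⟨by omega, ⟨j + 1, by ring⟩⟩, by
          simp only [WW_toMultiset]; exact p.2⟩)
  constructor
  · rintro ⟨⟨f, g⟩, h⟩ ⟨⟨f', g'⟩, h'⟩ e
    simp only [Subtype.mk.injEq, Prod.mk.injEq] at e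
    have e1 := ms_inj (fun j => j + 1) (fun x y h => by simpa using h) _ _ e.1
    have e2 := ms_inj (fun j => 2 * j + 2) (fun x y h => by simpa using h) _ _ e.2
    simp [e1, e2]
  · rintro ⟨⟨s, u⟩, h1, h2, h3⟩
    obtain ⟨f, rfl⟩ := map_succ_surj (fun j => j + 1) (fun j => j - 1) s (by
      intro i hi; have := h1 i hi; omega)
    obtain ⟨g, rfl⟩ := map_succ_surj (fun j => 2 * j + 2) (fun j => j / 2 - 1) u (by
      intro i hi; obtain ⟨h, r, hr⟩ := h2 i hi; omega)
    simp only [WW_toMultiset] at h3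
    exact ⟨⟨(f, g), h3⟩, rfl⟩

theorem fin1 (k : ℕ) : {f : ℕ →₀ ℕ | WW (fun j => j + 1) f = k}.Finite :=
  Finite.of_injective _ (part_bij k).1

theorem fin2 (k : ℕ) : {f : ℕ →₀ ℕ | WW (fun j => j + 1) f ≤ k}.Finite := by
  apply ((Set.finite_Iic k).biUnion (fun i _ => fin1 i)).subset
  intro f hf
  simp only [Set.mem_iUnion, Set.mem_Iic]
  exact ⟨_, hf, rfl⟩

theorem WW_le (f : ℕ →₀ ℕ) : WW (fun j => j + 1) f ≤ WW (fun j => 2 * j + 2) f := by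
  unfold WW
  apply Finset.sum_le_sum
  intro i _
  simp only
  gcongr <;> omega

theorem fin3 (k : ℕ) : {p : (ℕ →₀ ℕ) × (ℕ →₀ ℕ) |
    WW (fun j => j + 1) p.1 + WW (fun j => 2 * j + 2) p.2 = k}.Finite := by
  apply ((fin2 k).prod (fin2 k)).subset
  rintro ⟨f, g⟩ h
  have := WW_le g
  simp only [Set.mem_ofPred_eq, Set.mem_prod] at h ⊢
  omega

theorem fin4 (n : ℕ) : {t : TT | Wb t = n}.Finite := by
  apply ((fin2 n).prod ((fin2 n).prod (fin2 n))).subset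
  rintro ⟨f, g, h⟩ hh
  have := WW_le h
  simp only [Set.mem_ofPred_eq, Set.mem_prod, Wb] at hh ⊢
  omega

theorem X_card (n : ℕ) : {t : TT | Wb t = n}.ncard =
    ∑ k ∈ range (n + 1), cubicPartition (n - k) * partitionCount k := by
  classical
  have hX : {t : TT | Wb t = n} = ((range (n + 1)).biUnion
      (fun k => (fin1 k).toFinset ×ˢ (fin3 (n - k)).toFinset) : Finset TT) := by
    ext ⟨f, g, h⟩
    simp only [Set.mem_ofPred_eq, coe_biUnion, Set.mem_iUnion, coe_product, Set.Finite.coe_toFinset,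
      Set.mem_prod, Wb, Finset.coe_range, Set.mem_Iio, exists_prop]
    constructor
    · intro hh; exact ⟨_, by omega, rfl, by omega⟩
    · rintro ⟨k, hk, rfl, h2⟩; omega
  rw [hX, Set.ncard_coe_finset, Finset.card_biUnion]
  · apply sum_congr rfl
    intro k _
    rw [card_product, mul_comm, part_card, cubic_card,
      ← Set.ncard_eq_toFinset_card _ (fin1 k), ← Set.ncard_eq_toFinset_card _ (fin3 (n - k))]
    rfl
  · intro i _ j _ hij
    rw [Function.onFun, Finset.disjoint_left]
    rintro ⟨f, g⟩ h1 h2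
    simp only [mem_product, Set.Finite.mem_toFinset, Set.mem_ofPred_eq] at h1 h2
    exact hij (h1.1.symm.trans h2.1)

theorem pi_rec (n s : ℕ) :
    bipartitePi (n + s) n + (if s + 1 ≤ n then bipartitePi n (n - s - 1) else 0) =
      ∑ k ∈ range (n + 1), cubicPartition (n - k) * partitionCount k := by
  rw [← X_card]
  have h1 : bipartitePi (n + s) n = {t : TT | Wb t = n ∧ Wa t ≤ n + s}.ncard := pi_eq_X _ _
  have h2 : (if s + 1 ≤ n then bipartitePi n (n - s - 1) else 0)
      = {t : TT | Wb t = n ∧ n + s < Wa t}.ncard := by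
    have e : {t : TT | Wb t = n ∧ n + s < Wa t} = swT '' {t : TT | Wb t = n ∧ Wa t + s + 1 ≤ n} := by
      ext t
      constructor
      · rintro ⟨a, b⟩
        refine ⟨swT t, ⟨(Wb_sw t).trans a, ?_⟩, rfl⟩
        have := Wa_sw t
        omega
      · rintro ⟨t, ⟨a, b⟩, rfl⟩
        refine ⟨(Wb_sw t).trans a, ?_⟩
        have := Wa_sw t
        omega
    rw [e, Set.ncard_image_of_injective _ (fun x y h => by simpa [swT] using congrArg swT h)]
    split_ifs with hs
    · rw [pi_symm, pi_eq_X]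
      have : {t : TT | Wb t = n ∧ Wa t + s + 1 ≤ n} = {t : TT | Wb t = n ∧ Wa t ≤ n - s - 1} := by
        ext t; simp only [Set.mem_ofPred_eq]; omega
      rw [this]; rfl
    · have : {t : TT | Wb t = n ∧ Wa t + s + 1 ≤ n} = ∅ := by
        apply Set.eq_empty_of_forall_notMem; rintro t ⟨_, h⟩; omega
      rw [this]; simp
  rw [h1, h2, ← Set.ncard_union_eq ?_ ((fin4 n).subset (fun t h => h.1)) ((fin4 n).subset (fun t h => h.1))]
  · congr 1
    ext t; simp only [Set.mem_union, Set.mem_ofPred_eq]; omega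
  · rw [Set.disjoint_left]; rintro t ⟨_, a⟩ ⟨_, b⟩; omega

theorem alpha_fin (s k : ℕ) : (Function.support fun ℓ : ℕ => (-1 : ℤ) ^ ℓ *
    (partitionCountInt ((k : ℤ) - ℓ * (ℓ + 1) / 2 - ℓ * s) : ℤ)).Finite := by
  apply (Set.finite_Iic k).subset
  intro ℓ h
  by_contra hc
  apply h
  simp only [Set.mem_Iic, not_le] at hc
  have h1 : (ℓ : ℤ) ≤ (ℓ : ℤ) * (ℓ + 1) / 2 := by
    rw [Int.le_ediv_iff_mul_le (by norm_num)]
    have : (1 : ℤ) ≤ ℓ := by omega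
    nlinarith
  have h2 : (0 : ℤ) ≤ ℓ * s := by positivity
  simp only
  unfold partitionCountInt
  rw [if_neg (by omega)]
  simp

theorem alpha_rec (s k : ℕ) : alphaBip s k =
    partitionCount k - (if s + 1 ≤ k then alphaBip (s + 1) (k - s - 1) else 0) := by
  have h0 : alphaBip s k = partitionCount k - ∑' ℓ : ℕ, (-1 : ℤ) ^ ℓ *
    (partitionCountInt (((k : ℤ) - s - 1) - ℓ * (ℓ + 1) / 2 - ℓ * (s + 1)) : ℤ) := by
    unfold alphaBip
    rw [(summable_of_hasFiniteSupport (alpha_fin s k)).tsum_eq_zero_add, sub_eq_add_neg (partitionCount k : ℤ), ← tsum_neg]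
    congr 1
    · simp [partitionCountInt]
    · congr 1
      funext ℓ
      have : (k : ℤ) - ((ℓ + 1 : ℕ) : ℤ) * (((ℓ + 1 : ℕ) : ℤ) + 1) / 2 - ((ℓ + 1 : ℕ) : ℤ) * s
          = ((k : ℤ) - s - 1) - ℓ * (ℓ + 1) / 2 - ℓ * (s + 1) := by
        have e : ((ℓ + 1 : ℕ) : ℤ) * (((ℓ + 1 : ℕ) : ℤ) + 1) = ℓ * (ℓ + 1) + (ℓ + 1) * 2 := by
          push_cast; ring
        rw [e, Int.add_mul_ediv_right _ _ (by norm_num)]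
        push_cast; ring
      rw [this]; ring
  rw [h0]
  congr 1
  split_ifs with h
  · unfold alphaBip
    congr 1
    funext ℓ
    congr 4
    push_cast [Nat.sub_sub, Nat.cast_sub h]
    ring
  · rw [← tsum_zero (α := ℤ) (β := ℕ)]
    congr 1
    funext ℓ
    have h1 : (0 : ℤ) ≤ (ℓ : ℤ) * (ℓ + 1) / 2 := by positivity
    have h2 : (0 : ℤ) ≤ (ℓ : ℤ) * (s + 1) := by positivity
    unfold partitionCountInt
    rw [if_neg (by omega)]
    simp

theorem main_aux (n : ℕ) : ∀ s, (bipartitePi (n + s) n : ℤ) =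
    ∑ k ∈ range (n + 1), (cubicPartition (n - k) : ℤ) * alphaBip s k := by
  induction n using Nat.strong_induction_on with
  | _ n ih =>
    intro s
    have h := congrArg (Nat.cast : ℕ → ℤ) (pi_rec n s)
    push_cast at h
    simp only [alpha_rec s, mul_sub, sum_sub_distrib]
    rw [← h]
    suffices hh : ((if s + 1 ≤ n then (bipartitePi n (n - s - 1) : ℤ) else 0) : ℤ) =
      ∑ k ∈ range (n + 1), (cubicPartition (n - k) : ℤ) *
        (if s + 1 ≤ k then alphaBip (s + 1) (k - s - 1) else 0) by
      rw [← hh]; ring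
    split_ifs with hs
    · obtain ⟨r, rfl⟩ := Nat.exists_eq_add_of_le hs
      have e := ih r (by omega) (s + 1)
      rw [show s + 1 + r - s - 1 = r by omega, show s + 1 + r = r + (s + 1) by ring, e,
        show r + (s + 1) + 1 = (s + 1) + (r + 1) by ring, sum_range_add _ (s + 1) (r + 1)]
      rw [sum_eq_zero (s := range (s + 1)), zero_add]
      · apply sum_congr rfl
        intro k _
        rw [if_pos (by omega), show s + 1 + k - s - 1 = k by omega,
          show r + (s + 1) - (s + 1 + k) = r - k by omega]
      · intro k hk
        rw [mem_range] at hk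
        rw [if_neg (by omega), mul_zero]
    · symm
      apply sum_eq_zero
      intro k hk
      rw [mem_range] at hk
      rw [if_neg (by omega), mul_zero]

/-- `π(m,n) = Σ_{0 ≤ k ≤ min(m,n)} c(min(m,n) - k) · α(|m-n|, k)`. -/
theorem bipartitePi_eq_sum_cubic_alpha (m n : ℕ) :
    (bipartitePi m n : ℤ) =
      ∑ k ∈ Finset.range (min m n + 1),
        (cubicPartition (min m n - k) : ℤ) * alphaBip (((m : ℤ) - n).natAbs) k := by
  rcases le_total n m with h | h
  · obtain ⟨s, rfl⟩ := Nat.exists_eq_add_of_le h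
    rw [main_aux, min_eq_right h, show (((n + s : ℕ) : ℤ) - n).natAbs = s by omega]
  · obtain ⟨s, rfl⟩ := Nat.exists_eq_add_of_le h
    rw [pi_symm, main_aux, min_eq_left h, show ((m : ℤ) - ((m + s : ℕ) : ℤ)).natAbs = s by omega]
end

section
/- For all nonnegative integers m and n with m ≤ 2n, D(m,n) = Σ_{0 ≤ k ≤ L} c(L − k) · M(n − L, n − L + k), where L := min(2n − m, m) and D(m,n) := π(m,n) − π(m−1,n) with π(−1,n) := 0. -/
open Finset
lemma qbin_step {B : Type*} [CommRing B] (q a t t' : B) (N : ℕ) (hq : q^(N+1) = 0) (ht : t = q*t')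
    (Q : ℕ → B) (hQ : ∀ k, Q (k+1) * (1-q^(k+1)) = Q k) :
    (1 - t) * (∑ k ∈ range (N+1), (∏ i ∈ range k, (1 - a*q^i)) * Q k * t^k) =
    (1 - a*t) * (∑ k ∈ range (N+1), (∏ i ∈ range k, (1 - a*q^i)) * Q k * (t*q)^k) := by
  have htN : t^(N+1) = 0 := by rw [ht, mul_pow, hq, zero_mul]
  have h1 : ∀ M, (1 - t) * (∑ k ∈ range (M+1), (∏ i ∈ range k, (1 - a*q^i)) * Q k * t^k) =
    (1 - a*t) * (∑ k ∈ range (M+1), (∏ i ∈ range k, (1 - a*q^i)) * Q k * (t*q)^k)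
     - (∏ i ∈ range (M+1), (1 - a*q^i)) * Q M * t^(M+1) := by
    intro M
    induction M with
    | zero => simp; ring
    | succ M ih =>
      rw [sum_range_succ _ (M+1), sum_range_succ _ (M+1), mul_add, ih, prod_range_succ _ (M+1), ← hQ M]
      ring
  rw [h1 N, htN]; ring

lemma qbin {B : Type*} [CommRing B] (q a t t' : B) (N : ℕ) (hq : q^(N+1) = 0) (ht : t = q*t')
    (Q : ℕ → B) (hQ0 : Q 0 = 1) (hQ : ∀ k, Q (k+1) * (1-q^(k+1)) = Q k) :
    (∑ k ∈ range (N+1), (∏ i ∈ range k, (1 - a*q^i)) * Q k * t^k) * ∏ i ∈ range N, (1 - t*q^i) =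
    ∏ i ∈ range N, (1 - a*t*q^i) := by
  have h : ∀ M, (∑ k ∈ range (N+1), (∏ i ∈ range k, (1 - a*q^i)) * Q k * t^k) *
      ∏ i ∈ range M, (1 - t*q^i) =
    (∏ i ∈ range M, (1 - a*t*q^i)) *
      (∑ k ∈ range (N+1), (∏ i ∈ range k, (1 - a*q^i)) * Q k * (t*q^M)^k) := by
    intro M
    induction M with
    | zero => simp
    | succ M ih =>
      have := qbin_step q a (t*q^M) (t'*q^M) N hq (by rw [ht]; ring) Q hQ
      rw [prod_range_succ, prod_range_succ]
      have e : t * q^(M+1) = t*q^M*q := by ring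
      rw [e]
      linear_combination (1 - t*q^M) * ih + (∏ i ∈ range M, (1 - a*t*q^i)) * this
  rw [h N]
  have e : t*q^N = 0 := by
    rw [ht]; linear_combination t' * hq
  rw [e, sum_range_succ', sum_eq_zero]
  · simp [hQ0]
  · intro i _; simp

open PowerSeries in
noncomputable def G {R : Type*} [CommRing R] (w : ℕ → R) : PowerSeries R :=
  PowerSeries.mk fun n => ∑ l : n.Partition, (l.parts.map w).prod

lemma sum_partition_add {R : Type*} [CommRing R] (n j : ℕ) (hj : 0 < j) (F : Multiset ℕ → R) :
    ∑ l : (n+j).Partition, (if j ∈ l.parts then F (l.parts.erase j) else 0) =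
      ∑ l : n.Partition, F l.parts := by
  rw [← Finset.sum_filter]
  refine Finset.sum_bij' (i := fun l hl => (⟨l.parts.erase j, fun {i} hi => l.parts_pos (Multiset.mem_of_mem_erase hi), ?_⟩ : n.Partition))
    (j := fun l _ => (⟨j ::ₘ l.parts, ?_, ?_⟩ : (n+j).Partition)) ?_ ?_ ?_ ?_ ?_
  · have h := (Finset.mem_filter.mp hl).2
    have h2 := Multiset.sum_erase h
    have := l.parts_sum
    omega
  · intro i hi
    rcases Multiset.mem_cons.mp hi with h | h
    · omega
    · exact l.parts_pos h
  · rw [Multiset.sum_cons, l.parts_sum, add_comm]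
  · simp
  · simp
  · intro l hl
    ext1
    simp [Multiset.cons_erase (Finset.mem_filter.mp hl).2]
  · intro l hl
    ext1
    simp
  · intro l hl
    simp

lemma G_rec {R : Type*} [CommRing R] (w : ℕ → R) (j : ℕ) (hj : 0 < j) :
    G w * (1 - PowerSeries.C (w j) * PowerSeries.X^j) = G (Function.update w j 0) := by
  have : G w = G (Function.update w j 0) + PowerSeries.C (w j) * (PowerSeries.X^j * G w) := by
    ext n
    rw [map_add, PowerSeries.coeff_C_mul, PowerSeries.coeff_X_pow_mul']
    simp only [G, PowerSeries.coeff_mk]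
    have h0 : ∀ l : n.Partition, (l.parts.map w).prod =
      (l.parts.map (Function.update w j 0)).prod + w j *
        (if j ∈ l.parts then ((l.parts.erase j).map w).prod else 0) := by
      intro l
      split_ifs with h
      · have hz : (l.parts.map (Function.update w j 0)).prod = 0 :=
          Multiset.prod_eq_zero (Multiset.mem_map.mpr ⟨j, h, by simp⟩)
        rw [Multiset.prod_map_erase h, hz, zero_add]
      · rw [mul_zero, add_zero]
        congr 1
        apply Multiset.map_congr rfl
        intro x hx
        rw [Function.update_of_ne]
        rintro rfl; exact h hx
    rw [Finset.sum_congr rfl (fun l _ => h0 l), Finset.sum_add_distrib, ← Finset.mul_sum]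
    congr 2
    split_ifs with hn
    · obtain ⟨n', rfl⟩ := Nat.exists_eq_add_of_le' hn
      rw [sum_partition_add n' j hj (fun s => (s.map w).prod), Nat.add_sub_cancel]
    · apply Finset.sum_eq_zero
      intro l _
      rw [if_neg]
      intro h
      apply hn
      have := Multiset.le_sum_of_mem h
      rwa [l.parts_sum] at this
  linear_combination this

lemma G_change {R : Type*} [CommRing R] (w w' : ℕ → R) (j : ℕ) (hj : 0 < j) (h : ∀ i, i ≠ j → w i = w' i) :
    G w * (1 - PowerSeries.C (w j) * PowerSeries.X^j) = G w' * (1 - PowerSeries.C (w' j) * PowerSeries.X^j) := by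
  rw [G_rec w j hj, G_rec w' j hj]
  congr 1
  ext i
  by_cases hi : i = j
  · subst hi; simp
  · simp [hi, h i hi]

lemma G_prod {R : Type*} [CommRing R] (w : ℕ → R) (N : ℕ) :
    G w * ∏ i ∈ range N, (1 - PowerSeries.C (w (i+1)) * PowerSeries.X^(i+1)) =
      G (fun i => if i ≤ N then 0 else w i) := by
  induction N with
  | zero =>
    simp only [range_zero, prod_empty, mul_one]
    unfold G
    congr 1
    ext n
    apply Finset.sum_congr rfl
    intro l _
    congr 1
    apply Multiset.map_congr rfl
    intro x hx
    have := l.parts_pos hx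
    rw [if_neg (by omega)]
  | succ N ih =>
    rw [prod_range_succ, ← mul_assoc, ih]
    have := G_rec (fun i => if i ≤ N then 0 else w i) (N+1) (by omega)
    simp only [show ¬ (N+1 ≤ N) by omega, if_false] at this
    rw [this]
    congr 1
    ext i
    by_cases hi : i = N+1
    · subst hi; simp
    · simp only [Function.update_of_ne hi]
      split_ifs <;> first | rfl | omega

lemma G_high {R : Type*} [CommRing R] (w : ℕ → R) (N : ℕ) (hw : ∀ i, 0 < i → i ≤ N → w i = 0) :
    (PowerSeries.X : PowerSeries R)^(N+1) ∣ G w - 1 := by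
  rw [PowerSeries.X_pow_dvd_iff]
  intro m hm
  rw [map_sub, PowerSeries.coeff_one]
  simp only [G, PowerSeries.coeff_mk]
  split_ifs with h
  · subst h
    simp
  · rw [sub_zero]
    apply Finset.sum_eq_zero
    intro l _
    have : l.parts ≠ 0 := by
      intro h0
      have := l.parts_sum
      rw [h0] at this
      simp at this
      omega
    obtain ⟨x, hx⟩ := Multiset.exists_mem_of_ne_zero this
    apply Multiset.prod_eq_zero
    refine Multiset.mem_map.mpr ⟨x, hx, hw x (l.parts_pos hx) ?_⟩
    have := Multiset.le_sum_of_mem hx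
    rw [l.parts_sum] at this
    omega

lemma G_zero {R : Type*} [CommRing R] (w : ℕ → R) (hw : ∀ i, 0 < i → w i = 0) : G w = 1 := by
  ext n
  have := G_high w n (fun i hi _ => hw i hi)
  rw [PowerSeries.X_pow_dvd_iff] at this
  have := this n (by omega)
  rwa [map_sub, sub_eq_zero] at this

lemma G_congr {R : Type*} [CommRing R] (w w' : ℕ → R) (hw : ∀ i, 0 < i → w i = w' i) :
    G w = G w' := by
  unfold G
  congr 1
  ext n
  apply Finset.sum_congr rfl
  intro l _
  congr 1
  apply Multiset.map_congr rfl
  intro x hx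
  exact hw x (l.parts_pos hx)

noncomputable def Qk (R : Type*) [CommRing R] (k : ℕ) : PowerSeries R := G (fun i => if i ≤ k then 1 else 0)

lemma Qk_zero {R : Type*} [CommRing R] : Qk R 0 = 1 := by
  apply G_zero
  intro i hi
  rw [if_neg (by omega)]

lemma Qk_succ {R : Type*} [CommRing R] (k : ℕ) :
    Qk R (k+1) * (1 - PowerSeries.X^(k+1)) = Qk R k := by
  have := G_rec (R := R) (fun i => if i ≤ k+1 then 1 else 0) (k+1) (by omega)
  simp only [le_refl, if_true, map_one, one_mul] at this
  rw [Qk, this]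
  apply G_congr
  intro i hi
  by_cases h : i = k+1
  · subst h; simp
  · rw [Function.update_of_ne h]
    split_ifs <;> first | rfl | omega

lemma Qk_prod {R : Type*} [CommRing R] (k : ℕ) :
    Qk R k * ∏ i ∈ range k, (1 - PowerSeries.X^(i+1)) = 1 := by
  induction k with
  | zero => simp [Qk_zero]
  | succ k ih => rw [prod_range_succ]; linear_combination ih + (∏ i ∈ range k, (1 - PowerSeries.X^(i+1)))*Qk_succ (R := R) k

lemma G_mixed {R : Type*} [CommRing R] (z : R) (k : ℕ) :
    G (fun i => if i ≤ k then 1 else z) =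
      Qk R k * (∏ i ∈ range k, (1 - PowerSeries.C z * PowerSeries.X^(i+1))) * G (fun _ => z) := by
  have h1 := G_prod (fun i => if i ≤ k then 1 else z) k
  have h2 := G_prod (fun _ => z) k
  have h3 : G (fun i => if i ≤ k then 0 else if i ≤ k then 1 else z) = G (fun i => if i ≤ k then 0 else z) := by
    apply G_congr
    intro i _
    split_ifs <;> rfl
  have h4 : ∏ i ∈ range k, (1 - PowerSeries.C (if i+1 ≤ k then (1:R) else z) * PowerSeries.X^(i+1))
     = ∏ i ∈ range k, (1 - PowerSeries.X^(i+1)) := by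
    apply prod_congr rfl
    intro i hi
    rw [mem_range] at hi
    rw [if_pos (by omega)]; simp
  rw [h3, ← h2, h4] at h1
  linear_combination (-G (fun i => if i ≤ k then 1 else z)) * Qk_prod (R := R) k + Qk R k * h1

lemma G_noone {R : Type*} [CommRing R] (w : ℕ → R) (hw : w 1 = 1) :
    G (Function.update w 1 0) = G w * (1 - PowerSeries.X) := by
  rw [← G_rec w 1 (by omega), hw]; simp

lemma sum_count_one {R : Type*} [CommRing R] (w : ℕ → R) (hw : w 1 = 1) (k n : ℕ) :
    ∑ l : (n+k).Partition, (if l.parts.count 1 = k then (l.parts.map w).prod else 0) =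
      ∑ l : n.Partition, (l.parts.map (Function.update w 1 0)).prod := by
  induction k with
  | zero =>
    apply Finset.sum_congr rfl
    intro l _
    split_ifs with h
    · rw [Multiset.count_eq_zero] at h
      congr 1
      apply Multiset.map_congr rfl
      intro x hx
      rw [Function.update_of_ne]
      rintro rfl; exact h hx
    · symm
      apply Multiset.prod_eq_zero
      exact Multiset.mem_map.mpr ⟨1, Multiset.count_ne_zero.mp h, by simp⟩
  | succ k ih =>
    rw [← ih]
    have := sum_partition_add (n+k) 1 (by omega) (fun s => if s.count 1 = k then (s.map w).prod else 0)
    rw [← this]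
    apply Finset.sum_congr rfl
    intro l _
    by_cases h : 1 ∈ l.parts
    · rw [if_pos h]
      have h2 := Multiset.prod_map_erase (f := w) h
      rw [hw, one_mul] at h2
      rw [h2, Multiset.count_erase_self]
      have := Multiset.count_pos.mpr h
      apply if_congr _ rfl rfl
      omega
    · rw [if_neg h, if_neg]
      rw [Multiset.count_eq_zero.mpr h]
      omega

lemma G_count_one {R : Type*} [CommRing R] (w : ℕ → R) (hw : w 1 = 1) (k : ℕ) :
    (PowerSeries.mk fun n => ∑ l : n.Partition, (if l.parts.count 1 = k then (l.parts.map w).prod else 0))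
     = PowerSeries.X^k * (G w * (1 - PowerSeries.X)) := by
  rw [← G_noone w hw]
  ext n
  rw [PowerSeries.coeff_X_pow_mul', PowerSeries.coeff_mk]
  split_ifs with hn
  · obtain ⟨n', rfl⟩ := Nat.exists_eq_add_of_le' hn
    rw [sum_count_one w hw, Nat.add_sub_cancel, G, PowerSeries.coeff_mk]
  · apply Finset.sum_eq_zero
    intro l _
    rw [if_neg]
    intro h
    apply hn
    have h1 : l.parts.count 1 ≤ l.parts.sum := by
      have h3 := Multiset.le_count_iff_replicate_le.mp (le_refl (l.parts.count 1))
      obtain ⟨t, ht⟩ := Multiset.le_iff_exists_add.mp h3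
      have : l.parts.sum = (Multiset.replicate (l.parts.count 1) 1 + t).sum := by rw [← ht]
      rw [Multiset.sum_add, Multiset.sum_replicate] at this
      simp at this; omega
    rw [l.parts_sum] at h1
    omega

open LaurentPolynomial in
noncomputable def KC : PowerSeries (LaurentPolynomial ℤ) :=
  PowerSeries.mk fun n => (∑ l : n.Partition, T (crank l)) + if n = 1 then T 1 - 1 else 0

lemma prod_ind (R : Type*) [CommRing R] {n : ℕ} (l : n.Partition) (m : ℕ) :
    (l.parts.map (Function.update (fun i => if i ≤ m then (1:R) else 0) 1 0)).prod =
      if l.parts.count 1 = 0 ∧ l.parts.sup ≤ m then 1 else 0 := by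
  split_ifs with h
  · apply Multiset.prod_eq_one
    intro x hx
    obtain ⟨y, hy, rfl⟩ := Multiset.mem_map.mp hx
    rw [Function.update_of_ne, if_pos]
    · exact (Multiset.le_sup hy).trans h.2
    · rintro rfl
      exact Multiset.count_eq_zero.mp h.1 hy
  · rw [not_and_or] at h
    rcases h with h | h
    · apply Multiset.prod_eq_zero
      exact Multiset.mem_map.mpr ⟨1, Multiset.count_ne_zero.mp h, by simp⟩
    · rw [Multiset.sup_le] at h
      push Not at h
      obtain ⟨b, hb, hm⟩ := h
      apply Multiset.prod_eq_zero
      refine Multiset.mem_map.mpr ⟨b, hb, ?_⟩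
      by_cases h1 : b = 1
      · subst h1; simp
      · rw [Function.update_of_ne h1, if_neg (by omega)]

open LaurentPolynomial in
lemma prod_mixed (s : Multiset ℕ) (k : ℕ) :
    (s.map (fun i => if i ≤ k then (1:LaurentPolynomial ℤ) else T 1)).prod =
      T ((s.filter fun p => k < p).card : ℤ) := by
  induction s using Multiset.induction with
  | empty => simp
  | cons a s ih =>
    rw [Multiset.map_cons, Multiset.prod_cons, ih, Multiset.filter_cons]
    by_cases h : a ≤ k
    · rw [if_pos h, if_neg (by omega)]; simp
    · rw [if_neg h, if_pos (by omega), ← T_add]; congr 1; simp; ring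

lemma sup_le_sum {n : ℕ} (l : n.Partition) : l.parts.sup ≤ n := by
  rw [Multiset.sup_le]
  intro b hb
  have := Multiset.le_sum_of_mem hb
  rwa [l.parts_sum] at this

lemma count_le_sum {n : ℕ} (l : n.Partition) : l.parts.count 1 ≤ n := by
  have h3 := Multiset.le_count_iff_replicate_le.mp (le_refl (l.parts.count 1))
  obtain ⟨t, ht⟩ := Multiset.le_iff_exists_add.mp h3
  have : l.parts.sum = (Multiset.replicate (l.parts.count 1) 1 + t).sum := by rw [← ht]
  rw [Multiset.sum_add, Multiset.sum_replicate, l.parts_sum] at this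
  simp at this; omega

open LaurentPolynomial in
lemma crank_pointwise {n N : ℕ} (hn : n ≤ N+1) (l : n.Partition) :
    (T (crank l) : LaurentPolynomial ℤ) = (if n = 0 then 1 else 0)
     + ∑ m ∈ range N, T ((m+2 : ℕ) : ℤ) * ((l.parts.map (Function.update (fun i => if i ≤ m+2 then 1 else 0) 1 0)).prod
        - (l.parts.map (Function.update (fun i => if i ≤ m+1 then 1 else 0) 1 0)).prod)
     + ∑ k ∈ range (N+1), T (-((k+1 : ℕ) : ℤ)) * (if l.parts.count 1 = k+1 then
        (l.parts.map (fun i => if i ≤ k+1 then 1 else T 1)).prod else 0) := by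
  simp only [prod_ind]
  have hc := count_le_sum l
  have hs := sup_le_sum l
  by_cases h1 : l.parts.count 1 = 0
  · have e2 : ∑ k ∈ range (N+1), T (-((k+1 : ℕ) : ℤ)) * (if l.parts.count 1 = k+1 then
        (l.parts.map (fun i => if i ≤ k+1 then 1 else T 1)).prod else 0) = (0 : LaurentPolynomial ℤ) := by
      apply sum_eq_zero
      intro k _
      rw [if_neg (by omega), mul_zero]
    rw [e2, add_zero, crank, if_pos h1]
    simp only [h1, true_and]
    by_cases h0 : n = 0
    · subst h0
      have : l.parts.sup = 0 := by omega
      rw [this]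
      simp
    · rw [if_neg h0, zero_add]
      have h2 : 2 ≤ l.parts.sup := by
        have : l.parts ≠ 0 := by
          intro h
          have h3 := l.parts_sum
          rw [h] at h3
          simp at h3; omega
        obtain ⟨x, hx⟩ := Multiset.exists_mem_of_ne_zero this
        have h3 := l.parts_pos hx
        have h4 := Multiset.le_sup hx
        have h5 : x ≠ 1 := by
          rintro rfl
          exact Multiset.count_eq_zero.mp h1 hx
        omega
      rw [sum_eq_single (l.parts.sup - 2)]
      · rw [if_pos (by omega), if_neg (by omega), Nat.sub_add_cancel h2]; simp
      · intro b _ hb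
        by_cases h : l.parts.sup ≤ b + 1
        · rw [if_pos (by omega), if_pos h]; simp
        · rw [if_neg (by omega), if_neg h]; simp
      · intro h
        rw [mem_range] at h
        omega
  · have e2 : ∀ m, (if l.parts.count 1 = 0 ∧ l.parts.sup ≤ m then 1 else 0) = (0 : LaurentPolynomial ℤ) := by
      intro m
      rw [if_neg]; tauto
    simp only [e2, sub_zero, mul_zero, sum_const_zero, add_zero]
    rw [if_neg (by omega), zero_add, crank, if_neg h1, sum_eq_single (l.parts.count 1 - 1)]
    · have : l.parts.count 1 - 1 + 1 = l.parts.count 1 := by omega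
      rw [this, if_pos rfl, prod_mixed, ← T_add]
      congr 1; ring
    · intro b _ hb
      rw [if_neg (by omega), mul_zero]
    · intro h
      rw [mem_range] at h
      omega

open LaurentPolynomial in
lemma KC_mod (N : ℕ) : (PowerSeries.X : PowerSeries (LaurentPolynomial ℤ))^(N+2) ∣ KC -
    ((1 - PowerSeries.X + PowerSeries.C (T 1) * PowerSeries.X)
      + ∑ m ∈ range N, PowerSeries.C (T ((m+2 : ℕ) : ℤ)) * (
         G (Function.update (fun i => if i ≤ m+2 then 1 else 0) 1 0) - G (Function.update (fun i => if i ≤ m+1 then 1 else 0) 1 0))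
      + ∑ k ∈ range (N+1), PowerSeries.C (T (-((k+1 : ℕ) : ℤ))) * (PowerSeries.X^(k+1) * (G (fun i => if i ≤ k+1 then 1 else T 1) * (1 - PowerSeries.X)))) := by
  rw [PowerSeries.X_pow_dvd_iff]
  intro n hn
  rw [map_sub, sub_eq_zero]
  have e : ∀ k, PowerSeries.X^(k+1) * (G (fun i => if i ≤ k+1 then 1 else (T 1 : LaurentPolynomial ℤ)) * (1 - PowerSeries.X)) = _ :=
    fun k => (G_count_one (fun i => if i ≤ k+1 then 1 else (T 1 : LaurentPolynomial ℤ)) (by simp) (k+1)).symm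
  simp only [e]
  simp only [map_add, map_sub, map_sum, PowerSeries.coeff_C_mul, KC, PowerSeries.coeff_mk, G]
  rw [Finset.sum_congr rfl (fun l _ => crank_pointwise (show n ≤ N+1 by omega) l)]
  rw [sum_add_distrib, sum_add_distrib, sum_comm, sum_comm (s := univ) (t := range (N+1))]
  simp only [← mul_sum, sum_sub_distrib]
  have : ∑ l : n.Partition, (if n = 0 then (1:LaurentPolynomial ℤ) else 0) = if n = 0 then 1 else 0 := by
    by_cases h : n = 0
    · subst h; simp
    · simp [h]
  rw [this, PowerSeries.coeff_one, PowerSeries.coeff_X]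
  by_cases h0 : n = 0
  · subst h0; simp
  · by_cases h1 : n = 1
    · subst h1; simp; ring
    · simp [h0, h1]

open LaurentPolynomial in
lemma KC_mod' (N : ℕ) : (PowerSeries.X : PowerSeries (LaurentPolynomial ℤ))^(N+2) ∣ KC * G (fun _ => 1) -
    G (fun _ => T 1) * G (fun _ => T (-1)) := by
  set I := Ideal.span {(PowerSeries.X : PowerSeries (LaurentPolynomial ℤ))^(N+2)} with hI
  let φ := Ideal.Quotient.mk I
  have hφ : ∀ a b, (PowerSeries.X : PowerSeries (LaurentPolynomial ℤ))^(N+2) ∣ a - b ↔ φ a = φ b := by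
    intro a b
    rw [Ideal.Quotient.eq, hI, Ideal.mem_span_singleton]
  have hK := (hφ _ _).mp (KC_mod N)
  have hA : ∀ z : LaurentPolynomial ℤ, φ (G (fun _ => z)) * ∏ i ∈ range (N+1), (1 - φ (PowerSeries.C z) * φ PowerSeries.X^(i+1)) = 1 := by
    intro z
    have := (hφ _ _).mp (G_high (fun i => if i ≤ N+1 then 0 else z) (N+1) (by intro i _ hi; rw [if_pos hi]))
    rw [← G_prod (fun _ => z) (N+1)] at this
    simpa using this
  have hq : (φ PowerSeries.X)^(N+1+1) = 0 := by
    rw [← map_pow]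
    rw [← map_zero φ, ← hφ]; simp
  have hTT : ∀ k : ℕ, (T (k:ℤ) : LaurentPolynomial ℤ) = T 1 ^ k := by intro k; rw [T_pow]; simp
  have hTn : ∀ k : ℕ, (T (-(k:ℤ)) : LaurentPolynomial ℤ) = T (-1) ^ k := by intro k; rw [T_pow]; simp
  have hV : ∀ m : ℕ, G (Function.update (fun i => if i ≤ m+2 then 1 else 0) 1 0) - G (Function.update (fun i => if i ≤ m+1 then (1 : LaurentPolynomial ℤ) else 0) 1 0) = (1 - PowerSeries.X) * PowerSeries.X^(m+2) * Qk _ (m+2) := by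
    intro m
    rw [G_noone _ (by simp), G_noone _ (by simp)]
    have := Qk_succ (R := LaurentPolynomial ℤ) (m+1)
    change Qk _ (m+2) * _ - Qk _ (m+1) * _ = _
    rw [← this]; ring
  simp only [hV, G_mixed, hTT, hTn] at hK
  have hQ0 : φ (Qk _ 0) = 1 := by rw [Qk_zero, map_one]
  have hQ : ∀ k, φ (Qk _ (k+1)) * (1 - (φ PowerSeries.X)^(k+1)) = φ (Qk _ k) := by
    intro k; have := congrArg φ (Qk_succ (R := LaurentPolynomial ℤ) k); simpa using this
  have s1 := qbin (φ PowerSeries.X) 0 (φ PowerSeries.X * φ (PowerSeries.C (T 1))) (φ (PowerSeries.C (T 1))) (N+1) hq rfl (fun k => φ (Qk _ k)) hQ0 hQ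
  have s2 := qbin (φ PowerSeries.X) (φ PowerSeries.X * φ (PowerSeries.C (T 1))) (φ PowerSeries.X * φ (PowerSeries.C (T (-1)))) (φ (PowerSeries.C (T (-1)))) (N+1) hq rfl (fun k => φ (Qk _ k)) hQ0 hQ
  have hA1 := hA 1
  have hAz := hA (T 1)
  have hAi := hA (T (-1))
  have hzz : φ (PowerSeries.C (T 1)) * φ (PowerSeries.C (T (-1))) = 1 := by
    rw [← map_mul, ← map_mul, ← T_add]; simp
  rw [hφ, map_mul, map_mul]
  have hQ1 := hQ 0
  simp only [map_add, map_sub, map_mul, map_sum, map_prod, map_pow, map_one] at hK hA1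
  set q := φ PowerSeries.X
  set z := φ (PowerSeries.C (T 1))
  set y := φ (PowerSeries.C (T (-1)))
  set A := φ (G fun _ => T 1)
  set A' := φ (G fun _ => T (-1))
  set P := φ (G fun _ => 1)
  set K := φ KC
  set Q := fun k => φ (Qk (LaurentPolynomial ℤ) k) with hQd
  have hQd' : ∀ k, φ (Qk (LaurentPolynomial ℤ) k) = Q k := fun k => rfl
  simp only [hQd'] at hK s1 s2 hQ hQ0 hQ1
  clear_value q z y A A' P K Q
  set S1 := ∑ k ∈ range (N + 1 + 1), (∏ i ∈ range k, (1 - 0 * q ^ i)) * Q k * (q * z) ^ k with hS1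
  set S2 := ∑ k ∈ range (N + 1 + 1), (∏ i ∈ range k, (1 - q * z * q ^ i)) * Q k * (q * y) ^ k with hS2
  have e1 : (1 - q) * S1 = 1 - q + z * q + ∑ m ∈ range N, z ^ (m + 2) * ((1 - q) * q ^ (m + 2) * Q (m + 2)) := by
    rw [hS1, sum_range_succ', sum_range_succ', mul_add, mul_add, mul_sum]
    have : ∀ m, (1 - q) * ((∏ i ∈ range (m+1+1), (1 - 0 * q ^ i)) * Q (m+1+1) * (q * z) ^ (m+1+1))
       = z ^ (m + 2) * ((1 - q) * q ^ (m + 2) * Q (m + 2)) := by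
      intro m
      simp only [zero_mul, sub_zero, prod_const_one]
      ring
    simp only [this]
    simp only [zero_mul, sub_zero, prod_const_one, hQ0]
    rw [hQ0] at hQ1
    linear_combination q * z * hQ1
  have e2 : A * (1 - q) * (S2 - 1) = ∑ k ∈ range (N + 1), y ^ (k + 1) *
      (q ^ (k + 1) * (Q (k + 1) * (∏ i ∈ range (k + 1), (1 - z * q ^ (i + 1))) * A * (1 - q))) := by
    rw [hS2, sum_range_succ', range_zero, prod_empty, hQ0, pow_zero, mul_one, mul_one, add_sub_cancel_right,
      mul_sum]
    apply sum_congr rfl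
    intro k _
    have : ∏ i ∈ range (k+1), (1 - q * z * q ^ i) = ∏ i ∈ range (k + 1), (1 - z * q ^ (i + 1)) := by
      apply prod_congr rfl; intro i _; ring
    rw [this]; ring
  rw [← e1, ← e2] at hK
  have p1 : ∀ x : _, ∏ i ∈ range (N+1), (1 - q * x * q ^ i) = ∏ i ∈ range (N+1), (1 - x * q ^ (i + 1)) := by
    intro x; apply prod_congr rfl; intro i _; ring
  rw [p1] at s1 s2
  have p2 : ∏ i ∈ range (N+1), (1 - 0 * (q * z) * q ^ i) = 1 := by simp
  rw [p2] at s1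
  have hS1A : S1 = A := by linear_combination A * s1 - S1 * hAz
  have p3 : (1 - q) * ∏ i ∈ range (N+1), (1 - q * z * (q * y) * q ^ i) = ∏ i ∈ range (N+1), (1 - 1 * q^(i+1)) := by
    have : ∏ i ∈ range (N+2), (1 - 1 * q^(i+1)) = ∏ i ∈ range (N+1), (1 - 1 * q^(i+1)) := by
      rw [prod_range_succ, hq]; simp
    rw [← this, prod_range_succ' (fun i => 1 - 1 * q^(i+1)) (N+1), mul_comm]
    congr 1
    · apply prod_congr rfl
      intro i _
      linear_combination (-q^(i+2)) * hzz
    · simp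
  rw [hK, hS1A]
  linear_combination (-(1-q) * A * S2 * P) * hAi + A * P * A' * (1-q) * s2 + A * P * A' * p3 + A * A' * hA1

open LaurentPolynomial in
lemma KC_eq : KC * G (fun _ => 1) = G (fun _ => T 1) * G (fun _ => T (-1)) := by
  ext1 n
  have := KC_mod' n
  rw [PowerSeries.X_pow_dvd_iff] at this
  have := this n (by omega)
  rwa [map_sub, sub_eq_zero] at this

def PF (n : ℕ) : Finset (Multiset ℕ) := (univ : Finset n.Partition).image (fun l => l.parts)

lemma mem_PF (n : ℕ) (s : Multiset ℕ) : s ∈ PF n ↔ (∀ i ∈ s, 0 < i) ∧ s.sum = n := by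
  unfold PF
  rw [Finset.mem_image]
  constructor
  · rintro ⟨l, _, rfl⟩
    exact ⟨fun i hi => l.parts_pos hi, l.parts_sum⟩
  · rintro ⟨h1, h2⟩
    exact ⟨⟨s, fun {i} hi => h1 i hi, h2⟩, mem_univ _, rfl⟩

lemma sum_PF {M : Type*} [AddCommMonoid M] (n : ℕ) (f : Multiset ℕ → M) :
    ∑ s ∈ PF n, f s = ∑ l : n.Partition, f l.parts := by
  unfold PF
  rw [Finset.sum_image]
  intro a _ b _ h
  exact Nat.Partition.ext h

def EvF (n : ℕ) : Finset (Multiset ℕ) := (PF n).filter (fun s => ∀ i ∈ s, Even i)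

lemma mem_EvF (n : ℕ) (s : Multiset ℕ) : s ∈ EvF n ↔ (∀ i ∈ s, 0 < i ∧ Even i) ∧ s.sum = n := by
  unfold EvF
  rw [Finset.mem_filter, mem_PF]
  constructor
  · rintro ⟨⟨h1, h2⟩, h3⟩
    exact ⟨fun i hi => ⟨h1 i hi, h3 i hi⟩, h2⟩
  · rintro ⟨h1, h2⟩
    exact ⟨⟨fun i hi => (h1 i hi).1, h2⟩, fun i hi => (h1 i hi).2⟩

def mulF {α β : Type*} [DecidableEq α] [DecidableEq β] (F : ℕ → Finset α) (F' : ℕ → Finset β) (n : ℕ) : Finset (α × β) :=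
  (antidiagonal n).biUnion (fun p => F p.1 ×ˢ F' p.2)

lemma mem_mulF {α β : Type*} [DecidableEq α] [DecidableEq β] (F : ℕ → Finset α) (F' : ℕ → Finset β) (n : ℕ) (x : α × β) :
    x ∈ mulF F F' n ↔ ∃ i j, i + j = n ∧ x.1 ∈ F i ∧ x.2 ∈ F' j := by
  unfold mulF
  simp only [mem_biUnion, mem_product, HasAntidiagonal.mem_antidiagonal, Prod.exists]

noncomputable def gf {R α : Type*} [CommRing R] (F : ℕ → Finset α) (w : α → R) : PowerSeries R :=
  PowerSeries.mk fun n => ∑ a ∈ F n, w a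

lemma gf_mul {R α β : Type*} [CommRing R] [DecidableEq α] [DecidableEq β] (F : ℕ → Finset α) (F' : ℕ → Finset β)
    (w : α → R) (w' : β → R) (σ : α → ℕ) (τ : β → ℕ) (h : ∀ n, ∀ a ∈ F n, σ a = n) (h' : ∀ n, ∀ a ∈ F' n, τ a = n) :
    gf F w * gf F' w' = gf (mulF F F') (fun x => w x.1 * w' x.2) := by
  ext n
  rw [PowerSeries.coeff_mul]
  simp only [gf, PowerSeries.coeff_mk]
  unfold mulF
  rw [sum_biUnion]
  · apply sum_congr rfl
    intro p _
    rw [sum_product, sum_mul_sum]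
  · intro p _ p' _ hp
    rw [Function.onFun, Finset.disjoint_left]
    intro x hx hx'
    rw [mem_product] at hx hx'
    apply hp
    ext
    · rw [← h _ _ hx.1, h _ _ hx'.1]
    · rw [← h' _ _ hx.2, h' _ _ hx'.2]

lemma cubic_gf : (PowerSeries.mk fun n => (cubicPartition n : LaurentPolynomial ℤ)) =
    G (fun _ => 1) * gf EvF (fun _ => 1) := by
  have : G (fun _ => (1:LaurentPolynomial ℤ)) = gf PF (fun _ => 1) := by
    ext1 n
    simp only [G, gf, PowerSeries.coeff_mk, sum_PF]
    simp
  rw [this, gf_mul PF EvF _ _ Multiset.sum Multiset.sum (fun n a h => ((mem_PF _ _).mp h).2)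
    (fun n a h => ((mem_EvF _ _).mp h).2)]
  ext1 n
  simp only [gf, PowerSeries.coeff_mk, mul_one, sum_const, nsmul_eq_mul]
  congr 1
  unfold cubicPartition
  apply Nat.subtype_card
  intro x
  rw [mem_mulF]
  simp only [mem_PF, mem_EvF]
  constructor
  · rintro ⟨i, j, h1, ⟨h2, h3⟩, h4, h5⟩
    exact ⟨h2, h4, by omega⟩
  · rintro ⟨h2, h4, h5⟩
    exact ⟨_, _, h5, ⟨h2, rfl⟩, h4, rfl⟩

open LaurentPolynomial in
lemma KC_coeff (n : ℕ) (s : ℤ) : (PowerSeries.coeff n KC).coeff s = crankM s n := by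
  rw [KC, PowerSeries.coeff_mk, crankM]
  by_cases h : n = 1
  · subst h
    rw [if_pos rfl, if_pos rfl]
    have : ∀ l : Nat.Partition 1, crank l = -1 := by
      intro l
      have hl : l = Nat.Partition.indiscrete 1 := Subsingleton.elim _ _
      have hp : l.parts = {1} := by
        rw [hl, Nat.Partition.indiscrete_parts one_ne_zero]
      rw [crank, hp]
      simp
    simp only [this]
    rw [← T_zero]
    simp only [AddMonoidAlgebra.coeff_add, AddMonoidAlgebra.coeff_sub, AddMonoidAlgebra.coeff_sum, Finsupp.add_apply, Finsupp.sub_apply, Finsupp.finsetSum_apply, T_apply]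
    rw [sum_const, card_univ, Fintype.card_unique]
    split_ifs <;> first | omega | simp
  · rw [if_neg h, if_neg h, add_zero]
    simp only [AddMonoidAlgebra.coeff_sum, Finsupp.finsetSum_apply, T_apply]
    rw [Nat.subtype_card ((univ : Finset n.Partition).filter (fun l => crank l = s)) (by simp)]
    simp

open LaurentPolynomial in
lemma triple_count (s : ℤ) (n : ℕ) :
    (Nat.card {x : (Multiset ℕ × Multiset ℕ) × Multiset ℕ // (∀ i ∈ x.1.1, 0 < i) ∧ (∀ i ∈ x.1.2, 0 < i) ∧
      (∀ i ∈ x.2, 0 < i ∧ Even i) ∧ x.1.1.sum + x.1.2.sum + x.2.sum = n ∧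
      (x.1.1.card : ℤ) - x.1.2.card = s} : ℤ) =
    ∑ p ∈ antidiagonal n, (cubicPartition p.2 : ℤ) * crankM s p.1 := by
  have hG : ∀ e : ℤ, G (fun _ => (T e:LaurentPolynomial ℤ)) = gf PF (fun a => T (a.card * e)) := by
    intro e
    ext1 n
    simp only [G, gf, PowerSeries.coeff_mk, sum_PF]
    simp
  have key : gf (mulF (mulF PF PF) EvF) (fun x => (T (x.1.1.card * 1) * T (x.1.2.card * (-1)) * 1 : LaurentPolynomial ℤ)) =
     KC * (PowerSeries.mk fun n => (cubicPartition n : LaurentPolynomial ℤ)) := by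
    have hs := (fun n a (h : a ∈ PF n) => ((mem_PF _ _).mp h).2)
    rw [cubic_gf, ← mul_assoc, KC_eq, hG, hG, gf_mul PF PF _ _ Multiset.sum Multiset.sum hs hs,
      gf_mul (mulF PF PF) EvF _ _ (fun x => x.1.sum + x.2.sum) Multiset.sum _ (fun n a h => ((mem_EvF _ _).mp h).2)]
    intro n x hx
    obtain ⟨i, j, rfl, h1, h2⟩ := (mem_mulF _ _ _ _).mp hx
    rw [hs _ _ h1, hs _ _ h2]
  have key := congrArg (fun f => (PowerSeries.coeff n f).coeff s) key
  simp only [PowerSeries.coeff_mul, gf, PowerSeries.coeff_mk] at key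
  simp only [← nsmul_eq_mul', AddMonoidAlgebra.coeff_sum, Finsupp.finsetSum_apply, AddMonoidAlgebra.coeff_smul, Finsupp.smul_apply, KC_coeff, mul_one, ← T_add, T_apply] at key
  simp only [nsmul_eq_mul] at key
  rw [← key]
  rw [Nat.subtype_card ((mulF (mulF PF PF) EvF n).filter (fun x => (x.1.1.card : ℤ) + x.1.2.card * -1 = s))]
  · simp
  · intro x
    rw [mem_filter, mem_mulF]
    simp only [mem_mulF, mem_PF, mem_EvF]
    constructor
    · rintro ⟨⟨i, j, h1, ⟨a, b, h2, ⟨h3, h4⟩, h5, h6⟩, h7, h8⟩, h9⟩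
      exact ⟨h3, h5, h7, by omega, by omega⟩
    · rintro ⟨h3, h5, h7, h8, h9⟩
      exact ⟨⟨_, _, h8, ⟨_, _, rfl, ⟨h3, rfl⟩, h5, rfl⟩, h7, rfl⟩, by omega⟩

lemma fsum_range (f : ℕ →₀ ℕ) (g : ℕ → ℕ → ℕ) (hg : ∀ i, g i 0 = 0) (K : ℕ) (hK : ∀ i, K ≤ i → f i = 0) :
    f.sum g = ∑ i ∈ range K, g i (f i) := by
  apply Finsupp.sum_of_support_subset
  · intro i hi
    rw [mem_range]
    by_contra h
    exact Finsupp.mem_support_iff.mp hi (hK i (by omega))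
  · intro i _; exact hg i

lemma exists_bound (f : ℕ →₀ ℕ) : ∃ K, ∀ i, K ≤ i → f i = 0 := by
  refine ⟨f.support.sup id + 1, fun i hi => ?_⟩
  by_contra h
  have := Finset.le_sup (f := id) (Finsupp.mem_support_iff.mpr h)
  simp only [id] at this
  omega

lemma exists_finsupp (g : ℕ → ℕ) (K : ℕ) (h : ∀ i, K ≤ i → g i = 0) : ∃ f : ℕ →₀ ℕ, ∀ i, f i = g i :=
  ⟨Finsupp.onFinset (range K) g (fun i hi => by
    rw [mem_range]; by_contra hh; exact hi (h i (by omega))), fun _ => rfl⟩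

def Ef (a b : ℕ → ℕ) (i : ℕ) : ℕ := min (a i) (b i) - max (a (i+1)) (b (i+1))

lemma abel_sum (a b : ℕ → ℕ) (h : SteadilyDecreasing a b) (K : ℕ) :
    ∑ i ∈ range K, a i = ∑ i ∈ range K, ((i+1) * (a i - b i) + i * (b i - a i)) +
      ∑ i ∈ range K, (i+1) * Ef a b i + K * max (a K) (b K) := by
  induction K with
  | zero => simp
  | succ K ih =>
    rw [sum_range_succ, sum_range_succ, sum_range_succ, ih]
    have h1 := h K
    have h2 : min (a K) (b K) = Ef a b K + max (a (K+1)) (b (K+1)) := by unfold Ef; omega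
    have h3 : max (a K) (b K) = Ef a b K + max (a (K+1)) (b (K+1)) + (a K - b K) + (b K - a K) := by omega
    have h4 : a K = Ef a b K + max (a (K+1)) (b (K+1)) + (a K - b K) := by omega
    rw [h3]
    generalize (a K - b K) = d at *
    generalize (b K - a K) = d' at *
    generalize Ef a b K = e at *
    generalize max (a (K+1)) (b (K+1)) = M at *
    rw [h4]
    ring

lemma sum_even_odd (f : ℕ → ℕ) (K : ℕ) : ∑ i ∈ range (2*K), f i = ∑ j ∈ range K, (f (2*j) + f (2*j+1)) := by
  induction K with
  | zero => simp
  | succ K ih =>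
    rw [show 2*(K+1) = 2*K+1+1 by ring, sum_range_succ, sum_range_succ, ih, sum_range_succ]
    ring

lemma sum_uvw (a b u v w : ℕ → ℕ) (h : SteadilyDecreasing a b) (K : ℕ)
    (ha : ∀ i, K ≤ i → a i = 0) (hb : ∀ i, K ≤ i → b i = 0)
    (hu : ∀ j, u j = (a j - b j) + Ef a b (2*j)) (hv : ∀ j, v j = (b j - a j) + Ef a b (2*j))
    (hw : ∀ j, w j = Ef a b (2*j+1)) :
    ∑ i ∈ range K, a i = ∑ j ∈ range K, (j+1) * u j + ∑ j ∈ range K, j * v j +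
      ∑ j ∈ range K, (2*j+2) * w j := by
  have h1 := abel_sum a b h (2*K)
  rw [ha (2*K) (by omega), hb (2*K) (by omega)] at h1
  have ext : ∀ f : ℕ → ℕ, (∀ i, K ≤ i → f i = 0) → ∑ i ∈ range (2*K), f i = ∑ i ∈ range K, f i := by
    intro f hf
    symm
    apply sum_subset
    · intro i; simp only [mem_range]; omega
    · intro i _ hi
      apply hf; simpa using hi
  rw [ext a ha, ext _ (fun i hi => by rw [ha i hi, hb i hi]; simp), sum_even_odd] at h1
  rw [h1, max_self, mul_zero, add_zero, ← sum_add_distrib, ← sum_add_distrib, ← sum_add_distrib]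
  apply sum_congr rfl
  intro j _
  rw [hu, hv, hw]
  ring

lemma Ef_swap (a b : ℕ → ℕ) : Ef a b = Ef b a := by
  ext i; unfold Ef; rw [min_comm, max_comm]

lemma SD_swap {a b : ℕ → ℕ} (h : SteadilyDecreasing a b) : SteadilyDecreasing b a := by
  intro i; have := h i; omega

lemma uvw_inj (a b a' b' : ℕ → ℕ) (h : SteadilyDecreasing a b) (h' : SteadilyDecreasing a' b') (K : ℕ)
    (ha : ∀ i, K ≤ i → a i = 0) (hb : ∀ i, K ≤ i → b i = 0)
    (ha' : ∀ i, K ≤ i → a' i = 0) (hb' : ∀ i, K ≤ i → b' i = 0)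
    (hu : ∀ j, (a j - b j) + Ef a b (2*j) = (a' j - b' j) + Ef a' b' (2*j))
    (hv : ∀ j, (b j - a j) + Ef a b (2*j) = (b' j - a' j) + Ef a' b' (2*j))
    (hw : ∀ j, Ef a b (2*j+1) = Ef a' b' (2*j+1)) : ∀ i, a i = a' i ∧ b i = b' i := by
  have hE : ∀ i, Ef a b i = Ef a' b' i := by
    intro i
    rcases Nat.even_or_odd' i with ⟨j, rfl | rfl⟩
    · have := hu j; have := hv j; omega
    · exact hw j
  have key : ∀ k i, K ≤ i + k → a i = a' i ∧ b i = b' i := by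
    intro k
    induction k with
    | zero => intro i hi; rw [ha i hi, ha' i hi, hb i hi, hb' i hi]; simp
    | succ k ih =>
      intro i hi
      have h1 := ih (i+1) (by omega)
      have h2 := hE i
      have h3 := hE (2*i)
      have h4 := hu i
      have h5 := hv i
      rw [h3] at h4 h5
      have h6 := h i
      have h7 := h' i
      unfold Ef at h2
      omega
  intro i
  exact key K i (by omega)

lemma uvw_surj (u v w : ℕ → ℕ) (K : ℕ)
    (hu : ∀ i, K ≤ i → u i = 0) (hv : ∀ i, K ≤ i → v i = 0) (hw : ∀ i, K ≤ i → w i = 0) :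
    ∃ a b : ℕ → ℕ, SteadilyDecreasing a b ∧ (∀ i, 2*K ≤ i → a i = 0) ∧ (∀ i, 2*K ≤ i → b i = 0) ∧
      (∀ j, (a j - b j) + Ef a b (2*j) = u j) ∧ (∀ j, (b j - a j) + Ef a b (2*j) = v j) ∧
      (∀ j, Ef a b (2*j+1) = w j) := by
  let E : ℕ → ℕ := fun i => if i % 2 = 0 then min (u (i/2)) (v (i/2)) else w (i/2)
  let c : ℕ → ℕ := fun i => E i + (u i - v i) + (v i - u i)
  have hEe : ∀ j, E (2*j) = min (u j) (v j) := by
    intro j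
    have h2 : 2 * j / 2 = j := by omega
    have h3 : 2 * j % 2 = 0 := by omega
    simp only [E, h2, h3, if_true]
  have hE : ∀ i, 2*K ≤ i → E i = 0 := by
    intro i hi
    simp only [E]
    rw [hu (i/2) (by omega), hw (i/2) (by omega)]; simp
  have hc : ∀ i, 2*K ≤ i → c i = 0 := by
    intro i hi
    simp only [c]
    rw [hE i hi, hu i (by omega), hv i (by omega)]
  let M : ℕ → ℕ := fun i => ∑ j ∈ Ico i (2*K), c j
  have hM0 : ∀ i, 2*K ≤ i → M i = 0 := by
    intro i hi
    simp only [M]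
    rw [Finset.Ico_eq_empty (by omega)]; simp
  have hM : ∀ i, M i = c i + M (i+1) := by
    intro i
    by_cases hi : 2*K ≤ i
    · rw [hM0 i hi, hM0 (i+1) (by omega), hc i hi]
    · simp only [M]
      rw [Finset.sum_eq_sum_Ico_succ_bot (by omega)]
  have hmax : ∀ i, max (E i + M (i+1) + (u i - v i)) (E i + M (i+1) + (v i - u i)) = M i := by
    intro i
    rw [hM i]; simp only [c]; omega
  have hEf : ∀ i, Ef (fun i => E i + M (i+1) + (u i - v i)) (fun i => E i + M (i+1) + (v i - u i)) i = E i := by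
    intro i
    unfold Ef
    simp only [hmax]
    omega
  refine ⟨fun i => E i + M (i+1) + (u i - v i), fun i => E i + M (i+1) + (v i - u i), ?_, ?_, ?_, ?_, ?_, ?_⟩
  · intro i
    simp only [hmax]
    omega
  · intro i hi
    simp only
    rw [hE i hi, hM0 (i+1) (by omega), hu i (by omega)]; simp
  · intro i hi
    simp only
    rw [hE i hi, hM0 (i+1) (by omega), hv i (by omega)]; simp
  · intro j
    rw [hEf]
    rw [hEe]; simp only; omega
  · intro j
    rw [hEf]
    rw [hEe]; simp only; omega
  · intro j
    rw [hEf]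
    simp only [E]
    rw [if_neg (by omega), show (2*j+1)/2 = j by omega]

def PS (m n : ℕ) : Set ((ℕ →₀ ℕ) × (ℕ →₀ ℕ)) := {p |
    (∀ i, p.1 (i + 1) ≤ p.1 i) ∧ (∀ i, p.2 (i + 1) ≤ p.2 i) ∧
    SteadilyDecreasing p.1 p.2 ∧
    (p.1.sum fun _ x => x) = m ∧ (p.2.sum fun _ x => x) = n}

def XF (m n : ℕ) : Set (((ℕ →₀ ℕ) × (ℕ →₀ ℕ)) × (ℕ →₀ ℕ)) := {x |
   (x.1.1.sum fun j c => (j+1)*c) + (x.1.2.sum fun j c => j*c) + (x.2.sum fun j c => (2*j+2)*c) = m ∧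
   (x.1.2.sum fun j c => (j+1)*c) + (x.1.1.sum fun j c => j*c) + (x.2.sum fun j c => (2*j+2)*c) = n}

lemma bound2 (p : (ℕ →₀ ℕ) × (ℕ →₀ ℕ)) : ∃ K, (∀ i, K ≤ i → p.1 i = 0) ∧ (∀ i, K ≤ i → p.2 i = 0) := by
  obtain ⟨K, hK⟩ := exists_bound p.1
  obtain ⟨L, hL⟩ := exists_bound p.2
  exact ⟨max K L, fun i hi => hK i (by omega), fun i hi => hL i (by omega)⟩

lemma exists_Phi (p : (ℕ →₀ ℕ) × (ℕ →₀ ℕ)) : ∃ x : ((ℕ →₀ ℕ) × (ℕ →₀ ℕ)) × (ℕ →₀ ℕ),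
    (∀ j, x.1.1 j = (p.1 j - p.2 j) + Ef p.1 p.2 (2*j)) ∧ (∀ j, x.1.2 j = (p.2 j - p.1 j) + Ef p.1 p.2 (2*j)) ∧
    (∀ j, x.2 j = Ef p.1 p.2 (2*j+1)) := by
  obtain ⟨K, h1, h2⟩ := bound2 p
  obtain ⟨u, hu⟩ := exists_finsupp (fun j => (p.1 j - p.2 j) + Ef p.1 p.2 (2*j)) K (by
    intro i hi; unfold Ef; rw [h1 i hi, h1 (2*i) (by omega)]; simp)
  obtain ⟨v, hv⟩ := exists_finsupp (fun j => (p.2 j - p.1 j) + Ef p.1 p.2 (2*j)) K (by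
    intro i hi; unfold Ef; rw [h2 i hi, h1 (2*i) (by omega)]; simp)
  obtain ⟨w, hw⟩ := exists_finsupp (fun j => Ef p.1 p.2 (2*j+1)) K (by
    intro i hi; unfold Ef; rw [h1 (2*i+1) (by omega)]; simp)
  exact ⟨((u, v), w), hu, hv, hw⟩

lemma sums_eq (p : (ℕ →₀ ℕ) × (ℕ →₀ ℕ)) (x : ((ℕ →₀ ℕ) × (ℕ →₀ ℕ)) × (ℕ →₀ ℕ)) (h : SteadilyDecreasing p.1 p.2)
    (hu : ∀ j, x.1.1 j = (p.1 j - p.2 j) + Ef p.1 p.2 (2*j)) (hv : ∀ j, x.1.2 j = (p.2 j - p.1 j) + Ef p.1 p.2 (2*j))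
    (hw : ∀ j, x.2 j = Ef p.1 p.2 (2*j+1)) :
    (p.1.sum fun _ x => x) = (x.1.1.sum fun j c => (j+1)*c) + (x.1.2.sum fun j c => j*c) + (x.2.sum fun j c => (2*j+2)*c) ∧
    (p.2.sum fun _ x => x) = (x.1.2.sum fun j c => (j+1)*c) + (x.1.1.sum fun j c => j*c) + (x.2.sum fun j c => (2*j+2)*c) := by
  obtain ⟨K1, h1, h2⟩ := bound2 p
  obtain ⟨K2, h3, h4⟩ := bound2 x.1
  obtain ⟨K3, h5⟩ := exists_bound x.2
  have hh : ∀ {f : ℕ →₀ ℕ} {L}, (∀ i, L ≤ i → f i = 0) → L ≤ K1 + K2 + K3 → ∀ i, K1+K2+K3 ≤ i → f i = 0 :=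
    fun hf hL i hi => hf i (by omega)
  replace h1 := hh h1 (by omega)
  replace h2 := hh h2 (by omega)
  replace h3 := hh h3 (by omega)
  replace h4 := hh h4 (by omega)
  replace h5 := hh h5 (by omega)
  rw [fsum_range p.1 _ (by simp) _ h1, fsum_range p.2 _ (by simp) _ h2, fsum_range x.1.1 _ (by simp) _ h3,
    fsum_range x.1.2 _ (by simp) _ h4, fsum_range x.2 _ (by simp) _ h5, fsum_range x.1.1 _ (by simp) _ h3,
    fsum_range x.1.2 _ (by simp) _ h4]
  constructor
  · exact sum_uvw p.1 p.2 x.1.1 x.1.2 x.2 h _ h1 h2 hu hv hw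
  · apply sum_uvw p.2 p.1 x.1.2 x.1.1 x.2 (SD_swap h) _ h2 h1 <;> rw [Ef_swap] <;> assumption

lemma PS_card (m n : ℕ) : (PS m n).ncard = (XF m n).ncard := by
  choose Φ hΦu hΦv hΦw using exists_Phi
  apply Set.ncard_congr (fun p _ => Φ p)
  · rintro p ⟨_, _, h, h1, h2⟩
    have := sums_eq p (Φ p) h (hΦu p) (hΦv p) (hΦw p)
    exact ⟨by rw [← this.1, h1], by rw [← this.2, h2]⟩
  · rintro p p' ⟨_, _, h, _, _⟩ ⟨_, _, h', _, _⟩ he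
    obtain ⟨K1, h1, h2⟩ := bound2 p
    obtain ⟨K2, h3, h4⟩ := bound2 p'
    have := uvw_inj p.1 p.2 p'.1 p'.2 h h' (K1+K2) (fun i hi => h1 i (by omega)) (fun i hi => h2 i (by omega))
      (fun i hi => h3 i (by omega)) (fun i hi => h4 i (by omega))
      (fun j => by rw [← hΦu, ← hΦu, he]) (fun j => by rw [← hΦv, ← hΦv, he]) (fun j => by rw [← hΦw, ← hΦw, he])
    ext i
    · exact (this i).1
    · exact (this i).2
  · rintro x ⟨hx1, hx2⟩
    obtain ⟨K2, h3, h4⟩ := bound2 x.1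
    obtain ⟨K3, h5⟩ := exists_bound x.2
    obtain ⟨a, b, h, ha, hb, hu, hv, hw⟩ := uvw_surj x.1.1 x.1.2 x.2 (K2+K3) (fun i hi => h3 i (by omega))
      (fun i hi => h4 i (by omega)) (fun i hi => h5 i (by omega))
    obtain ⟨α, hα⟩ := exists_finsupp a _ ha
    obtain ⟨β, hβ⟩ := exists_finsupp b _ hb
    obtain rfl : ⇑α = a := funext hα
    obtain rfl : ⇑β = b := funext hβ
    have hs := sums_eq (α, β) x h (fun j => (hu j).symm) (fun j => (hv j).symm) (fun j => (hw j).symm)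
    refine ⟨(α, β), ⟨fun i => ?_, fun i => ?_, h, ?_, ?_⟩, ?_⟩
    · have := h i; simp only; omega
    · have := h i; simp only; omega
    · rw [hs.1, hx1]
    · rw [hs.2, hx2]
    · ext j
      · rw [hΦu, ← hu j]
      · rw [hΦv, ← hv j]
      · rw [hΦw, ← hw j]

def XM (m n : ℕ) : Set ((Multiset ℕ × Multiset ℕ) × Multiset ℕ) := {x |
   (∀ i ∈ x.1.2, 0 < i) ∧ (∀ i ∈ x.2, 0 < i ∧ Even i) ∧ x.1.1.sum + x.1.2.sum + x.2.sum = n ∧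
   x.1.1.card + n = m + x.1.2.card}

lemma toM_sum (u : ℕ →₀ ℕ) (g : ℕ → ℕ) : ((Finsupp.toMultiset u).map g).sum = u.sum fun j c => g j * c := by
  induction u using Finsupp.induction_linear with
  | zero => simp
  | add f g' hf hg => 
    rw [map_add, Multiset.map_add, Multiset.sum_add, hf, hg, Finsupp.sum_add_index'] <;> simp [mul_add]
  | single a b =>
    rw [Finsupp.toMultiset_single, Multiset.map_nsmul, Multiset.sum_nsmul, Finsupp.sum_single_index] <;> simp [mul_comm]

lemma toM_inj : Function.Injective (Finsupp.toMultiset (α := ℕ)) := by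
  intro a b h
  rw [← Finsupp.toMultiset_toFinsupp a, h, Finsupp.toMultiset_toFinsupp]

lemma toM_surj : Function.Surjective (Finsupp.toMultiset (α := ℕ)) := by
  intro a
  exact ⟨Multiset.toFinsupp a, Multiset.toFinsupp_toMultiset a⟩

lemma fs_succ (u : ℕ →₀ ℕ) : (u.sum fun j c => (j+1)*c) = (u.sum fun j c => j * c) + (Finsupp.toMultiset u).card := by
  rw [Finsupp.card_toMultiset, ← Finsupp.sum_add]
  apply Finsupp.sum_congr
  intro i _
  simp; ring

lemma XF_card (m n : ℕ) : (XF m n).ncard = (XM m n).ncard := by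
  have hmap : ∀ (x : ((ℕ →₀ ℕ) × (ℕ →₀ ℕ)) × (ℕ →₀ ℕ)), x ∈ XF m n ↔ (((Finsupp.toMultiset x.1.1, (Finsupp.toMultiset x.1.2).map (fun j => j+1)),
    (Finsupp.toMultiset x.2).map (fun j => 2*j+2)) : (Multiset ℕ × Multiset ℕ) × Multiset ℕ) ∈ XM m n := by
    intro x
    have h1 := toM_sum x.1.1 id
    have h2 := toM_sum x.1.2 (fun j => j+1)
    have h3 := toM_sum x.2 (fun j => 2*j+2)
    have h4 := fs_succ x.1.1
    have h5 := fs_succ x.1.2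
    rw [Multiset.map_id] at h1
    simp only [id] at h1
    simp only [XF, XM, Set.mem_ofPred_eq, h1, h2, h3, Multiset.card_map]
    constructor
    · rintro ⟨h6, h7⟩
      refine ⟨?_, ?_, by omega, by omega⟩
      · intro i hi
        obtain ⟨j, _, rfl⟩ := Multiset.mem_map.mp hi
        omega
      · intro i hi
        obtain ⟨j, _, rfl⟩ := Multiset.mem_map.mp hi
        exact ⟨by omega, ⟨j+1, by ring⟩⟩
    · rintro ⟨_, _, h6, h7⟩
      constructor <;> omega
  apply Set.ncard_congr (fun x _ => ((Finsupp.toMultiset x.1.1, (Finsupp.toMultiset x.1.2).map (fun j => j+1)),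
    (Finsupp.toMultiset x.2).map (fun j => 2*j+2)))
  · intro x hx
    exact (hmap x).mp hx
  · intro x y _ _ h
    simp only [Prod.mk.injEq] at h
    obtain ⟨⟨h1, h2⟩, h3⟩ := h
    have h1 := toM_inj h1
    have h2 := toM_inj (Multiset.map_injective (fun a b (h : a + 1 = b + 1) => by omega) h2)
    have h3 := toM_inj (Multiset.map_injective (fun a b (h : 2*a + 2 = 2*b + 2) => by omega) h3)
    exact Prod.ext (Prod.ext h1 h2) h3
  · intro y hy
    obtain ⟨u, hu⟩ := toM_surj y.1.1
    obtain ⟨v, hv⟩ := toM_surj (y.1.2.map (fun i => i - 1))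
    obtain ⟨w, hw⟩ := toM_surj (y.2.map (fun i => i/2 - 1))
    have e : ((Finsupp.toMultiset u, (Finsupp.toMultiset v).map (fun j => j+1)),
    (Finsupp.toMultiset w).map (fun j => 2*j+2)) = y := by
      rw [hu, hv, hw, Multiset.map_map, Multiset.map_map]
      refine Prod.ext (Prod.ext rfl ?_) ?_
      · simp only
        conv_rhs => rw [← Multiset.map_id y.1.2]
        apply Multiset.map_congr rfl
        intro i hi
        have := hy.1 i hi
        simp; omega
      · simp only
        conv_rhs => rw [← Multiset.map_id y.2]
        apply Multiset.map_congr rfl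
        intro i hi
        obtain ⟨h1, k, hk⟩ := hy.2.1 i hi
        simp; omega
    refine ⟨((u, v), w), ?_, e⟩
    rw [hmap]
    rw [e]; exact hy

lemma bip_card (m n : ℕ) : bipartitePi m n = (XM m n).ncard := by
  rw [← XF_card, ← PS_card, ← Nat.card_coe_set_eq]
  rfl

def YM (m n : ℕ) : Set ((Multiset ℕ × Multiset ℕ) × Multiset ℕ) := {x |
   (∀ i ∈ x.1.1, 0 < i) ∧ (∀ i ∈ x.1.2, 0 < i) ∧
      (∀ i ∈ x.2, 0 < i ∧ Even i) ∧ x.1.1.sum + x.1.2.sum + x.2.sum = n ∧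
      (x.1.1.card : ℤ) - x.1.2.card = (m : ℤ) - n}

lemma YM_finite (m n : ℕ) : (YM m n).Finite := by
  apply Set.Finite.subset ((mulF (mulF PF PF) EvF n).finite_toSet)
  rintro x ⟨h3, h5, h7, h8, h9⟩
  rw [Finset.mem_coe, mem_mulF]
  refine ⟨_, _, h8, (mem_mulF _ _ _ _).mpr ⟨_, _, rfl, (mem_PF _ _).mpr ⟨h3, rfl⟩, (mem_PF _ _).mpr ⟨h5, rfl⟩⟩,
    (mem_EvF _ _).mpr ⟨h7, rfl⟩⟩

lemma card_le_of_pos (s : Multiset ℕ) (h : ∀ i ∈ s, 0 < i) : s.card ≤ s.sum := by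
  have := Multiset.card_nsmul_le_sum (s := s) (a := 1) (fun x hx => h x hx)
  simpa using this

lemma XM_zero (n : ℕ) : XM 0 n = YM 0 n := by
  ext x
  constructor
  · rintro ⟨h1, h2, h3, h4⟩
    have h5 := card_le_of_pos _ h1
    have : x.1.1 = 0 := by
      rw [← Multiset.card_eq_zero]; omega
    refine ⟨?_, h1, h2, h3, by omega⟩
    rw [this]; simp
  · rintro ⟨h0, h1, h2, h3, h4⟩
    exact ⟨h1, h2, h3, by omega⟩

lemma XM_succ (m n : ℕ) : XM (m+1) n = YM (m+1) n ∪ (fun x => ((0 ::ₘ x.1.1, x.1.2), x.2)) '' XM m n := by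
  ext x
  constructor
  · rintro ⟨h1, h2, h3, h4⟩
    by_cases h0 : 0 ∈ x.1.1
    · right
      refine ⟨((x.1.1.erase 0, x.1.2), x.2), ⟨h1, h2, ?_, ?_⟩, ?_⟩
      · have := Multiset.sum_erase h0
        simp only; omega
      · have := Multiset.card_erase_add_one h0
        simp only; omega
      · simp [Multiset.cons_erase h0]
    · left
      refine ⟨?_, h1, h2, h3, by omega⟩
      intro i hi
      rcases Nat.eq_zero_or_pos i with rfl | h
      · exact absurd hi h0
      · exact h
  · rintro (⟨h0, h1, h2, h3, h4⟩ | ⟨y, ⟨h1, h2, h3, h4⟩, rfl⟩)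
    · exact ⟨h1, h2, h3, by omega⟩
    · refine ⟨h1, h2, ?_, ?_⟩
      · simp only [Multiset.sum_cons]; omega
      · simp only [Multiset.card_cons]; omega

lemma XM_finite (m n : ℕ) : (XM m n).Finite := by
  induction m with
  | zero => rw [XM_zero]; exact YM_finite 0 n
  | succ m ih => rw [XM_succ]; exact (YM_finite _ n).union (ih.image _)

lemma Dbip_YM (m n : ℕ) : Dbip m n = (YM m n).ncard := by
  unfold Dbip
  rw [bip_card]
  cases m with
  | zero => rw [if_pos rfl, XM_zero]; simp
  | succ m =>
    have hd : Disjoint (YM (m+1) n) ((fun x => ((0 ::ₘ x.1.1, x.1.2), x.2)) '' XM m n) := by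
      rw [Set.disjoint_left]
      rintro x ⟨h, _⟩ ⟨y, _, rfl⟩
      exact absurd (h 0 (by simp)) (by simp)
    rw [if_neg (by omega), bip_card, Nat.add_sub_cancel, XM_succ,
      Set.ncard_union_eq hd (YM_finite _ _) ((XM_finite _ _).image _), Set.ncard_image_of_injective]
    · push_cast; ring
    · intro x y h
      simp only [Prod.mk.injEq, Multiset.cons_inj_right] at h
      exact Prod.ext (Prod.ext h.1.1 h.1.2) h.2

lemma YM_sum (m n : ℕ) : ((YM m n).ncard : ℤ) = ∑ p ∈ antidiagonal n, (cubicPartition p.2 : ℤ) * crankM ((m:ℤ) - n) p.1 := by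
  rw [← triple_count, ← Nat.card_coe_set_eq]
  rfl

lemma YM_symm (m m' n : ℕ) (h : m + m' = 2 * n) : (YM m n).ncard = (YM m' n).ncard := by
  have : YM m' n = (fun x => ((x.1.2, x.1.1), x.2)) '' YM m n := by
    ext x
    constructor
    · rintro ⟨h0, h1, h2, h3, h4⟩
      exact ⟨((x.1.2, x.1.1), x.2), ⟨h1, h0, h2, by simp only; omega, by simp only; omega⟩, rfl⟩
    · rintro ⟨y, ⟨h0, h1, h2, h3, h4⟩, rfl⟩
      exact ⟨h1, h0, h2, by simp only; omega, by simp only; omega⟩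
  rw [this, Set.ncard_image_of_injective]
  intro x y h
  simp only [Prod.mk.injEq] at h
  exact Prod.ext (Prod.ext h.1.2 h.1.1) h.2

lemma crankM_eq_zero (s j : ℕ) (h : j < s) : crankM (s : ℤ) j = 0 := by
  unfold crankM
  split_ifs with h1 h2 h3
  · omega
  · simp at h3; omega
  · rfl
  · have : IsEmpty {l : j.Partition // crank l = s} := by
      constructor
      rintro ⟨l, hl⟩
      unfold crank at hl
      have h4 := sup_le_sum l
      have h5 := card_le_of_pos l.parts (fun i hi => l.parts_pos hi)
      rw [l.parts_sum] at h5
      have h6 := Multiset.card_le_card (Multiset.filter_le (fun p => l.parts.count 1 < p) l.parts)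
      split_ifs at hl <;> omega
    simp

lemma final_sum (L n : ℕ) (h : L ≤ n) (c : ℕ → ℤ) (M : ℕ → ℤ) (hM : ∀ j, j < n - L → M j = 0) :
    ∑ p ∈ antidiagonal n, c p.2 * M p.1 = ∑ k ∈ range (L + 1), c (L - k) * M (n - L + k) := by
  rw [Finset.Nat.sum_antidiagonal_eq_sum_range_succ (fun i j => c j * M i)]
  have : n.succ = (n - L) + (L + 1) := by omega
  rw [this, Finset.sum_range_add, sum_eq_zero, zero_add]
  · apply sum_congr rfl
    intro k _
    congr 2; omega
  · intro j hj
    rw [hM j (mem_range.mp hj), mul_zero]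

/-- for `m ≤ 2n`, with `L = min(2n - m, m)`,
`D(m,n) = Σ_{0 ≤ k ≤ L} c(L - k) · M(n - L, n - L + k)`. -/
theorem Dbip_eq_sum_cubic_crankM_min (m n : ℕ) (h : m ≤ 2 * n) :
    Dbip m n = ∑ k ∈ Finset.range (min (2 * n - m) m + 1),
      (cubicPartition (min (2 * n - m) m - k) : ℤ) *
        crankM ((n : ℤ) - (min (2 * n - m) m : ℤ)) (n - min (2 * n - m) m + k) := by
  rw [Dbip_YM]
  rcases le_total m n with hmn | hmn
  · have hL : min (2 * n - m) m = m := by omega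
    have hL' : min (2 * (n:ℤ) - m) m = m := by omega
    rw [hL, hL', YM_symm m (2*n-m) n (by omega), YM_sum]
    have hs : ((2*n-m : ℕ) : ℤ) - n = (n:ℤ) - m := by omega
    rw [hs]
    apply final_sum m n hmn (fun j => (cubicPartition j : ℤ)) (fun j => crankM ((n:ℤ) - m) j)
    intro j hj
    have hs : (n:ℤ) - m = ((n - m : ℕ) : ℤ) := by omega
    rw [hs]
    exact crankM_eq_zero _ _ hj
  · have hL : min (2 * n - m) m = 2 * n - m := by omega
    have hL' : min (2 * (n:ℤ) - m) m = 2 * n - m := by omega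
    rw [hL, hL', YM_sum]
    have hs : (n:ℤ) - (2 * n - m) = (m:ℤ) - n := by ring
    rw [hs]
    apply final_sum (2*n-m) n (by omega) (fun j => (cubicPartition j : ℤ)) (fun j => crankM ((m:ℤ) - n) j)
    intro j hj
    have hs : (m:ℤ) - n = ((m - n : ℕ) : ℤ) := by omega
    rw [hs]
    exact crankM_eq_zero _ _ (by omega)
end

section
/- For all nonnegative integers m and n with m > 2n, D(m,n) = 0; that is, π(m,n) = π(m−1,n) whenever m > 2n, where D(m,n) := π(m,n) − π(m−1,n). -/
open Finset

lemma bip_key (a b : ℕ →₀ ℕ) (h : ∀ i, a (i + 1) ≤ b i) :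
    (a.sum fun _ x => x) ≤ a 0 + (b.sum fun _ x => x) := by
  obtain ⟨N, hN⟩ := (a.support ∪ b.support).exists_nat_subset_range
  have ha : a.support ⊆ range (N + 1) := fun i hi => by
    have := hN (mem_union_left _ hi)
    simp only [mem_range] at *; omega
  have hb : b.support ⊆ range N := fun i hi => hN (mem_union_right _ hi)
  rw [Finsupp.sum_of_support_subset a ha _ (by simp),
    Finsupp.sum_of_support_subset b hb _ (by simp), sum_range_succ', add_comm]
  exact Nat.add_le_add_left (sum_le_sum fun i _ => h i) _

lemma bip_le (b : ℕ →₀ ℕ) (i : ℕ) : b i ≤ (b.sum fun _ x => x) := by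
  by_cases hi : i ∈ b.support
  · exact single_le_sum (f := fun i => b i) (fun _ _ => Nat.zero_le _) hi
  · simp [Finsupp.notMem_support_iff.mp hi]

lemma bip_sum (a : ℕ →₀ ℕ) :
    ((a + Finsupp.single 0 1).sum fun _ x => x) = (a.sum fun _ x => x) + 1 := by
  rw [Finsupp.sum_add_index' (by simp) (by simp), Finsupp.sum_single_index rfl]

lemma bip_step (k n : ℕ) (h : 2 * n ≤ k) : bipartitePi k n = bipartitePi (k + 1) n := by
  unfold bipartitePi
  refine Nat.card_congr (Equiv.ofBijective
    (fun p => ⟨(p.1.1 + Finsupp.single 0 1, p.1.2), ?_⟩) ⟨?_, ?_⟩)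
  · obtain ⟨⟨a, b⟩, h1, h2, h3, h4, h5⟩ := p
    replace h1 : ∀ i, a (i + 1) ≤ a i := h1
    replace h2 : ∀ i, b (i + 1) ≤ b i := h2
    replace h3 : SteadilyDecreasing a b := h3
    replace h4 : (a.sum fun _ x => x) = k := h4
    replace h5 : (b.sum fun _ x => x) = n := h5
    refine ⟨fun i => ?_, h2, fun i => ?_, ?_, h5⟩
    · have := h1 i
      simp [Finsupp.single_apply]; omega
    · have := h3 i
      simp only [Finsupp.add_apply, Finsupp.single_apply]
      simp only [max_le_iff, le_min_iff] at *
      have : ¬ (0 = i + 1) := by omega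
      simp only [this, if_false]
      omega
    · rw [bip_sum, h4]
  · rintro ⟨⟨a, b⟩, _⟩ ⟨⟨c, d⟩, _⟩ e
    simpa using e
  · rintro ⟨⟨a, b⟩, h1, h2, h3, h4, h5⟩
    replace h1 : ∀ i, a (i + 1) ≤ a i := h1
    replace h2 : ∀ i, b (i + 1) ≤ b i := h2
    replace h3 : SteadilyDecreasing a b := h3
    replace h4 : (a.sum fun _ x => x) = k + 1 := h4
    replace h5 : (b.sum fun _ x => x) = n := h5
    have hs : ∀ i, a (i+1) ≤ a i ∧ a (i+1) ≤ b i ∧ b (i+1) ≤ a i ∧ b (i+1) ≤ b i := by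
      intro i
      have := h3 i
      simp only [max_le_iff, le_min_iff] at this
      tauto
    have k1 := bip_key a b (fun i => (hs i).2.1)
    have k2 := bip_le b 0
    have k3 := (hs 0).2.1
    have k4 := bip_le b 1
    simp only [zero_add] at k3
    have hc : a - Finsupp.single 0 1 + Finsupp.single 0 1 = a := by
      ext i
      rcases i with _ | i
      · simp; omega
      · simp
    have e0 : (a - Finsupp.single 0 1 : ℕ →₀ ℕ) 0 = a 0 - 1 := by simp
    have e1 : ∀ i, (a - Finsupp.single 0 1 : ℕ →₀ ℕ) (i + 1) = a (i + 1) := by simp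
    refine ⟨⟨(a - Finsupp.single 0 1, b), ?_, h2, ?_, ?_, h5⟩, ?_⟩
    · rintro (_ | i)
      · simp only [e1, e0, zero_add]
        have := e1 0
        simp only [zero_add] at this
        omega
      · simp only [e1]; exact h1 _
    · rintro (_ | i)
      · have := e1 0
        have := hs 0
        simp only [zero_add] at *
        simp only [max_le_iff, le_min_iff]
        omega
      · simp only [e1]; exact h3 _
    · have := bip_sum (a - Finsupp.single 0 1)
      rw [hc] at this
      simp only
      omega
    · simp [hc]

/-- for `m > 2n`, `D(m,n) = 0`; that is, `π(m,n) = π(m-1,n)`. -/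
theorem Dbip_eq_zero_of_two_mul_lt (m n : ℕ) (h : 2 * n < m) :
    Dbip m n = 0 ∧ bipartitePi m n = bipartitePi (m - 1) n := by
  obtain ⟨k, rfl⟩ : ∃ k, m = k + 1 := ⟨m - 1, by omega⟩
  have := bip_step k n (by omega)
  simp [Dbip, this]
end
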